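/- Let 𝔤 be a finite-dimensional complex simple Lie algebra of type E6 and let (e,h,f) be an sl2-triple in 𝔤 such that e is a distinguished nilpotent element with dim 𝔤^e = 8 (the subregular orbit of E6). Then the centre 𝔷(𝔤^e) of 𝔤^e has dimension 5, the eigenvalues of the restriction of ad h to 𝔷(𝔤^e) are 2, 8, 10, 14, 16, and e satisfies property (P). -/

import Mathlib

open scoped ComplexOrder

/-- The centralizer `𝔤^e = {x ∈ 𝔤 : ⁅x, e⁆ = 0}` of an element `e`, as a Lie subalgebra. -/
def centralizer (L : Type*) [LieRing L] [LieAlgebra ℂ L] (e : L) : LieSubalgebra ℂ L where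
  carrier := {x : L | ⁅x, e⁆ = 0}
  add_mem' := fun {a b} ha hb => by
    simp only [Set.mem_setOf_eq] at *
    rw [add_lie, ha, hb, add_zero]
  zero_mem' := by simp
  smul_mem' := fun c a ha => by
    simp only [Set.mem_setOf_eq] at *
    rw [smul_lie, ha, smul_zero]
  lie_mem' := fun {a b} ha hb => by
    simp only [Set.mem_setOf_eq] at *
    simp [lie_lie, ha, hb]

/-- Membership in the centre `𝔷(𝔤^e)` of the centralizer of `e`:
`v` centralizes `e` and commutes with every element of `𝔤^e`. -/
def InCenterOfCentralizer (L : Type*) [LieRing L] [LieAlgebra ℂ L] (e v : L) : Prop :=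
  ⁅v, e⁆ = 0 ∧ ∀ y : L, ⁅y, e⁆ = 0 → ⁅v, y⁆ = 0

/-- The centre `𝔷(𝔤^e)` of the centralizer of `e`, as a subspace of `L`. -/
def zCenter (L : Type*) [LieRing L] [LieAlgebra ℂ L] (e : L) : Submodule ℂ L where
  carrier := {v : L | ⁅v, e⁆ = 0 ∧ ∀ y : L, ⁅y, e⁆ = 0 → ⁅v, y⁆ = 0}
  add_mem' := fun {a b} ha hb => ⟨by rw [add_lie, ha.1, hb.1, add_zero],
    fun y hy => by rw [add_lie, ha.2 y hy, hb.2 y hy, add_zero]⟩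
  zero_mem' := ⟨zero_lie e, fun y _ => zero_lie y⟩
  smul_mem' := fun c a ha => ⟨by rw [smul_lie, ha.1, smul_zero],
    fun y hy => by rw [smul_lie, ha.2 y hy, smul_zero]⟩

/-- Property (P) for an `sl₂`-triple `(e, h, f)`: for every nonzero `v ∈ 𝔷(𝔤^e)`, the
eigenspace `𝔷_max` of the restriction of `ad h` to `𝔷(𝔤^e)` for its largest eigenvalue is
contained in `[[f, 𝔤^e], v] = {⁅⁅f, x⁆, v⁆ : x ∈ 𝔤^e}`. -/
def PropertyP (L : Type*) [LieRing L] [LieAlgebra ℂ L] (e h f : L) : Prop :=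
  ∀ m : ℂ,
    (∃ z : L, z ≠ 0 ∧ InCenterOfCentralizer L e z ∧ ⁅h, z⁆ = m • z) →
    (∀ m' : ℂ, (∃ z : L, z ≠ 0 ∧ InCenterOfCentralizer L e z ∧ ⁅h, z⁆ = m' • z) → m' ≤ m) →
    ∀ v : L, InCenterOfCentralizer L e v → v ≠ 0 →
      ∀ z : L, InCenterOfCentralizer L e z → ⁅h, z⁆ = m • z →
        ∃ x : L, ⁅x, e⁆ = 0 ∧ ⁅⁅f, x⁆, v⁆ = z

/-- The stabilizer `{x ∈ 𝔮 : ξ(⁅x, y⁆) = 0 for all y ∈ 𝔮}` of a linear functional `ξ`. -/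
def coadStab (Q : Type*) [LieRing Q] [LieAlgebra ℂ Q] (ξ : Module.Dual ℂ Q) : Submodule ℂ Q where
  carrier := {x : Q | ∀ y : Q, ξ ⁅x, y⁆ = 0}
  add_mem' := fun {a b} ha hb y => by rw [add_lie, map_add, ha y, hb y, add_zero]
  zero_mem' := fun y => by rw [zero_lie, map_zero]
  smul_mem' := fun c a ha y => by rw [smul_lie, map_smul, ha y, smul_zero]

/-- The index of a complex Lie algebra:
`ind 𝔮 = min_{ξ ∈ 𝔮*} dim {x ∈ 𝔮 : ξ(⁅x, y⁆) = 0 for all y ∈ 𝔮}`. -/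
noncomputable def lieIndex (Q : Type*) [LieRing Q] [LieAlgebra ℂ Q] : ℕ :=
  ⨅ ξ : Module.Dual ℂ Q, Module.finrank ℂ ↥(coadStab Q ξ)

/-- A nilpotent element `e` is distinguished if the only `x ∈ 𝔤^e` such that `ad x` is a
semisimple endomorphism of `𝔤` is `x = 0`. -/
def IsDistinguished (L : Type*) [LieRing L] [LieAlgebra ℂ L] (e : L) : Prop :=
  ∀ x : L, ⁅x, e⁆ = 0 → (LieAlgebra.ad ℂ L x).IsSemisimple → x = 0

/-! ### Sparse integer matrices -/

section

attribute [local instance] LieRing.ofAssociativeRing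

/-- A formal sum of integer multiples of matrix units, as a list of triples
(row, column, coefficient). -/
abbrev SparseMat := List (ℕ × ℕ × ℤ)

namespace SparseMat

/-- The entry of a formal sum at a given position. -/
def coeff (l : SparseMat) (i j : ℕ) : ℤ :=
  l.foldr (fun t s => bif Nat.beq t.1 i then (bif Nat.beq t.2.1 j then t.2.2 + s else s) else s) 0

/-- The product of two formal sums of matrix units of size 27. -/
def mul (l m : SparseMat) : SparseMat :=
  l.foldr (fun t r => m.foldr (fun u r' =>
    bif Nat.beq t.2.1 u.1 && Nat.blt u.1 27 then (t.1, u.2.1, t.2.2 * u.2.2) :: r' else r') r) []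

/-- Scalar multiples of formal sums. -/
def smul (c : ℤ) (l : SparseMat) : SparseMat := l.map fun t => (t.1, t.2.1, c * t.2.2)

/-- The transpose of a formal sum. -/
def transpose (l : SparseMat) : SparseMat := l.map fun t => (t.2.1, t.1, t.2.2)

/-- The commutator of two formal sums. -/
def bracket (l m : SparseMat) : SparseMat := l.mul m ++ smul (-1) (m.mul l)

/-- A decision procedure for the vanishing of a formal sum. -/
def isZero (l : SparseMat) : Bool := l.all fun t => Nat.beq (l.coeff t.1 t.2.1).natAbs 0

/-- The sublist of the terms at positions with nonzero coefficient. -/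
def reduce (l : SparseMat) : SparseMat :=
  l.filter fun t => !Nat.beq (l.coeff t.1 t.2.1).natAbs 0

/-- A decision procedure for the equality of the matrices of two formal sums. -/
def same (l m : SparseMat) : Bool := isZero (l ++ smul (-1) m)

/-- The pairing of two formal sums given by the trace form `∑ i j, l i j * m i j`. -/
def pair (l m : SparseMat) : ℤ := l.foldr (fun t s => t.2.2 * m.coeff t.1 t.2.1 + s) 0

/-- The complex matrix of a formal sum. -/
noncomputable def toMatrix (l : SparseMat) : Matrix (Fin 27) (Fin 27) ℂ :=
  Matrix.of fun i j => (l.coeff i j : ℂ)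

@[simp] lemma coeff_nil (i j : ℕ) : coeff [] i j = 0 := rfl

lemma coeff_cons (t : ℕ × ℕ × ℤ) (l : SparseMat) (i j : ℕ) :
    coeff (t :: l) i j = (if t.1 = i ∧ t.2.1 = j then t.2.2 else 0) + coeff l i j := by
  rw [coeff, List.foldr_cons, ← coeff]
  rcases h1 : Nat.beq t.1 i <;> rcases h2 : Nat.beq t.2.1 j <;>
    simp_all [← Nat.beq_eq]

lemma coeff_append (l m : SparseMat) (i j : ℕ) :
    coeff (l ++ m) i j = coeff l i j + coeff m i j := by
  induction l with
  | nil => simp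
  | cons t l ih => simp only [List.cons_append, coeff_cons, ih, add_assoc]

lemma coeff_smul (c : ℤ) (l : SparseMat) (i j : ℕ) : coeff (smul c l) i j = c * coeff l i j := by
  induction l with
  | nil => simp [smul]
  | cons t l ih =>
    have : smul c (t :: l) = (t.1, t.2.1, c * t.2.2) :: smul c l := rfl
    rw [this, coeff_cons, coeff_cons, ih]
    split_ifs <;> simp [mul_add]

lemma coeff_transpose (l : SparseMat) (i j : ℕ) : coeff (transpose l) i j = coeff l j i := by
  induction l with
  | nil => simp [transpose]
  | cons t l ih =>
    have : transpose (t :: l) = (t.2.1, t.1, t.2.2) :: transpose l := rfl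
    rw [this, coeff_cons, coeff_cons, ih]
    simp [and_comm]

lemma coeff_foldr_mul (t : ℕ × ℕ × ℤ) (m r : SparseMat) (i j : ℕ) :
    coeff (m.foldr (fun u r' => bif Nat.beq t.2.1 u.1 && Nat.blt u.1 27 then
      (t.1, u.2.1, t.2.2 * u.2.2) :: r' else r') r) i j =
    (if t.1 = i ∧ t.2.1 < 27 then t.2.2 * coeff m t.2.1 j else 0) + coeff r i j := by
  induction m with
  | nil => simp
  | cons u m ih =>
    by_cases h : t.2.1 = u.1 ∧ u.1 < 27
    · have hb : (Nat.beq t.2.1 u.1 && Nat.blt u.1 27) = true := by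
        simp [h.1, Nat.blt, h.2]
      rw [List.foldr_cons, hb, cond_true, coeff_cons, ih, coeff_cons]
      have h1 := h.1
      have h2 := h.2
      by_cases h3 : t.1 = i <;> by_cases h4 : u.2.1 = j <;>
        simp [h1, h2, h3, h4, mul_add, add_assoc]
    · have hb : (Nat.beq t.2.1 u.1 && Nat.blt u.1 27) = false := by
        rw [Bool.and_eq_false_iff]
        by_cases h1 : t.2.1 = u.1
        · right
          rw [Bool.eq_false_iff]
          intro h2
          exact h ⟨h1, Nat.le_of_ble_eq_true h2⟩
        · left
          rwa [← Bool.not_eq_true, Nat.beq_eq]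
      rw [List.foldr_cons, hb, cond_false, ih, coeff_cons]
      by_cases h1 : t.1 = i ∧ t.2.1 < 27
      · have : ¬ (u.1 = t.2.1 ∧ u.2.1 = j) := fun h2 => h ⟨h2.1.symm, h2.1 ▸ h1.2⟩
        simp [this]
      · simp [h1]

lemma coeff_mul (l m : SparseMat) (i j : ℕ) :
    coeff (mul l m) i j = ∑ k : Fin 27, coeff l i k * coeff m k j := by
  induction l with
  | nil => simp [mul]
  | cons t l ih =>
    have : mul (t :: l) m = m.foldr (fun u r' => bif Nat.beq t.2.1 u.1 && Nat.blt u.1 27 then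
      (t.1, u.2.1, t.2.2 * u.2.2) :: r' else r') (mul l m) := rfl
    rw [this, coeff_foldr_mul, ih]
    simp only [coeff_cons, add_mul, Finset.sum_add_distrib]
    congr 1
    by_cases h1 : t.1 = i
    · by_cases h2 : t.2.1 < 27
      · rw [if_pos ⟨h1, h2⟩, Finset.sum_eq_single ⟨t.2.1, h2⟩]
        · simp [h1]
        · intro k _ hk
          have : ¬ t.2.1 = k := fun h => hk (Fin.ext h.symm)
          simp [this]
        · simp
      · rw [if_neg (fun h => h2 h.2), Finset.sum_eq_zero]
        intro k _
        have : ¬ t.2.1 = k := fun h => h2 (h ▸ k.2)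
        simp [this]
    · simp [h1]

lemma coeff_eq_zero_of_isZero {l : SparseMat} (h : l.isZero = true) (i j : ℕ) :
    coeff l i j = 0 := by
  by_cases hm : ∃ t ∈ l, t.1 = i ∧ t.2.1 = j
  · obtain ⟨t, ht, rfl, rfl⟩ := hm
    have := List.all_eq_true.mp h t ht
    simpa using this
  · have aux : ∀ m : SparseMat, (∀ t ∈ m, ¬ (t.1 = i ∧ t.2.1 = j)) → coeff m i j = 0 := by
      intro m
      induction m with
      | nil => simp
      | cons t m ih =>
        intro hm
        rw [coeff_cons, if_neg (hm t (by simp)), ih (fun u hu => hm u (by simp [hu])), add_zero]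
    exact aux l (fun t ht h2 => hm ⟨t, ht, h2⟩)

@[simp] lemma toMatrix_nil : toMatrix [] = 0 := by
  ext i j
  simp [toMatrix]

lemma toMatrix_append (l m : SparseMat) : toMatrix (l ++ m) = toMatrix l + toMatrix m := by
  ext i j
  simp [toMatrix, coeff_append]

lemma toMatrix_smul (c : ℤ) (l : SparseMat) : toMatrix (smul c l) = (c : ℂ) • toMatrix l := by
  ext i j
  simp [toMatrix, coeff_smul]

lemma toMatrix_mul (l m : SparseMat) : toMatrix (mul l m) = toMatrix l * toMatrix m := by
  ext i j
  simp [toMatrix, coeff_mul, Matrix.mul_apply]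

lemma toMatrix_bracket (l m : SparseMat) :
    toMatrix (bracket l m) = ⁅toMatrix l, toMatrix m⁆ := by
  rw [bracket, toMatrix_append, toMatrix_smul, toMatrix_mul, toMatrix_mul, Ring.lie_def]
  simp [sub_eq_add_neg]

lemma toMatrix_eq_of_same {l m : SparseMat} (h : same l m = true) : toMatrix l = toMatrix m := by
  ext i j
  have := coeff_eq_zero_of_isZero h i j
  rw [coeff_append, coeff_smul] at this
  have h2 : coeff l i j = coeff m i j := by linarith
  simp [toMatrix, h2]

/-- The linear functional on complex matrices defined by a formal sum through the trace form. -/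
noncomputable def functional (l : SparseMat) : Matrix (Fin 27) (Fin 27) ℂ →ₗ[ℂ] ℂ where
  toFun M := ∑ i : Fin 27, ∑ j : Fin 27, (coeff l i j : ℂ) * M i j
  map_add' M N := by simp [mul_add, Finset.sum_add_distrib]
  map_smul' c M := by
    simp only [Matrix.smul_apply, smul_eq_mul, RingHom.id_apply, Finset.mul_sum]
    exact Finset.sum_congr rfl fun i _ => Finset.sum_congr rfl fun j _ => by ring

lemma functional_toMatrix {l : SparseMat} (hl : (l.all fun t => Nat.blt t.1 27 && Nat.blt t.2.1 27))
    (m : SparseMat) : functional l (toMatrix m) = (pair l m : ℂ) := by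
  simp only [functional, LinearMap.coe_mk, AddHom.coe_mk, toMatrix, Matrix.of_apply]
  norm_cast
  induction l with
  | nil => simp [pair]
  | cons t l ih =>
    rw [List.all_cons, Bool.and_eq_true] at hl
    have ht := hl.1
    rw [Bool.and_eq_true] at ht
    have h1 : t.1 < 27 := Nat.le_of_ble_eq_true ht.1
    have h2 : t.2.1 < 27 := Nat.le_of_ble_eq_true ht.2
    have : pair (t :: l) m = t.2.2 * m.coeff t.1 t.2.1 + pair l m := rfl
    rw [this, ← ih hl.2]
    simp only [coeff_cons, add_mul, Finset.sum_add_distrib]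
    congr 1
    rw [Finset.sum_eq_single ⟨t.1, h1⟩, Finset.sum_eq_single ⟨t.2.1, h2⟩]
    · simp
    · intro k _ hk
      have : ¬ t.2.1 = k := fun h => hk (Fin.ext h.symm)
      simp [this]
    · simp
    · intro k _ hk
      have : ¬ t.1 = k := fun h => hk (Fin.ext h.symm)
      simp [this]
    · simp

end SparseMat

/-! ### The minuscule representation of `E₆` -/

namespace E6

open SparseMat

/-- The positive roots of `E₆`, in coordinates with respect to the simple roots, with root vectors
in the 27-dimensional representation. -/
def posTable : List (List ℤ × SparseMat) := [
   ([1, 0, 0, 0, 0, 0],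
    [(0, 1, 1), (10, 12, 1), (13, 15, 1), (16, 17, 1), (18, 19, 1), (20, 21, 1)]),
   ([0, 1, 0, 0, 0, 0], [(3, 4, 1), (5, 6, 1), (7, 9, 1), (18, 20, 1), (19, 21, 1), (22, 23, 1)]),
   ([0, 0, 1, 0, 0, 0],
    [(1, 2, 1), (8, 10, 1), (11, 13, 1), (14, 16, 1), (19, 22, 1), (21, 23, 1)]),
   ([0, 0, 0, 1, 0, 0], [(2, 3, 1), (6, 8, 1), (9, 11, 1), (16, 18, 1), (17, 19, 1), (23, 24, 1)]),
   ([0, 0, 0, 0, 1, 0], [(3, 5, 1), (4, 6, 1), (11, 14, 1), (13, 16, 1), (15, 17, 1), (24, 25, 1)]),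
   ([0, 0, 0, 0, 0, 1], [(5, 7, 1), (6, 9, 1), (8, 11, 1), (10, 13, 1), (12, 15, 1), (25, 26, 1)]),
   ([1, 0, 1, 0, 0, 0],
    [(0, 2, -1), (8, 12, 1), (11, 15, 1), (14, 17, 1), (18, 22, -1), (20, 23, -1)]),
   ([0, 1, 0, 1, 0, 0],
    [(2, 4, 1), (5, 8, -1), (7, 11, -1), (16, 20, 1), (17, 21, 1), (22, 24, -1)]),
   ([0, 0, 1, 1, 0, 0],
    [(1, 3, -1), (6, 10, 1), (9, 13, 1), (14, 18, -1), (17, 22, 1), (21, 24, -1)]),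
   ([0, 0, 0, 1, 1, 0],
    [(2, 5, -1), (4, 8, 1), (9, 14, -1), (13, 18, 1), (15, 19, 1), (23, 25, -1)]),
   ([0, 0, 0, 0, 1, 1],
    [(3, 7, -1), (4, 9, -1), (8, 14, 1), (10, 16, 1), (12, 17, 1), (24, 26, -1)]),
   ([1, 0, 1, 1, 0, 0],
    [(0, 3, 1), (6, 12, 1), (9, 15, 1), (14, 19, -1), (16, 22, -1), (20, 24, 1)]),
   ([0, 1, 1, 1, 0, 0],
    [(1, 4, 1), (5, 10, 1), (7, 13, 1), (14, 20, 1), (17, 23, -1), (19, 24, -1)]),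
   ([0, 1, 0, 1, 1, 0],
    [(2, 6, -1), (3, 8, -1), (7, 14, 1), (13, 20, 1), (15, 21, 1), (22, 25, 1)]),
   ([0, 0, 1, 1, 1, 0],
    [(1, 5, 1), (4, 10, 1), (9, 16, -1), (11, 18, -1), (15, 22, 1), (21, 25, 1)]),
   ([0, 0, 0, 1, 1, 1],
    [(2, 7, 1), (4, 11, -1), (6, 14, -1), (10, 18, 1), (12, 19, 1), (23, 26, 1)]),
   ([1, 1, 1, 1, 0, 0],
    [(0, 4, -1), (5, 12, 1), (7, 15, 1), (14, 21, 1), (16, 23, 1), (18, 24, 1)]),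
   ([1, 0, 1, 1, 1, 0],
    [(0, 5, -1), (4, 12, 1), (9, 17, -1), (11, 19, -1), (13, 22, -1), (20, 25, -1)]),
   ([0, 1, 1, 1, 1, 0],
    [(1, 6, -1), (3, 10, 1), (7, 16, -1), (11, 20, 1), (15, 23, -1), (19, 25, 1)]),
   ([0, 1, 0, 1, 1, 1],
    [(2, 9, 1), (3, 11, 1), (5, 14, 1), (10, 20, 1), (12, 21, 1), (22, 26, -1)]),
   ([0, 0, 1, 1, 1, 1],
    [(1, 7, -1), (4, 13, -1), (6, 16, -1), (8, 18, -1), (12, 22, 1), (21, 26, -1)]),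
   ([1, 1, 1, 1, 1, 0],
    [(0, 6, 1), (3, 12, 1), (7, 17, -1), (11, 21, 1), (13, 23, 1), (18, 25, -1)]),
   ([1, 0, 1, 1, 1, 1],
    [(0, 7, 1), (4, 15, -1), (6, 17, -1), (8, 19, -1), (10, 22, -1), (20, 26, 1)]),
   ([0, 1, 1, 2, 1, 0], [(1, 8, 1), (2, 10, 1), (7, 18, 1), (9, 20, 1), (15, 24, 1), (17, 25, 1)]),
   ([0, 1, 1, 1, 1, 1],
    [(1, 9, 1), (3, 13, -1), (5, 16, -1), (8, 20, 1), (12, 23, -1), (19, 26, -1)]),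
   ([1, 1, 1, 2, 1, 0],
    [(0, 8, -1), (2, 12, 1), (7, 19, 1), (9, 21, 1), (13, 24, -1), (16, 25, -1)]),
   ([1, 1, 1, 1, 1, 1],
    [(0, 9, -1), (3, 15, -1), (5, 17, -1), (8, 21, 1), (10, 23, 1), (18, 26, 1)]),
   ([0, 1, 1, 2, 1, 1],
    [(1, 11, -1), (2, 13, -1), (5, 18, 1), (6, 20, 1), (12, 24, 1), (17, 26, -1)]),
   ([1, 1, 2, 2, 1, 0],
    [(0, 10, 1), (1, 12, 1), (7, 22, -1), (9, 23, -1), (11, 24, -1), (14, 25, -1)]),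
   ([1, 1, 1, 2, 1, 1],
    [(0, 11, 1), (2, 15, -1), (5, 19, 1), (6, 21, 1), (10, 24, -1), (16, 26, 1)]),
   ([0, 1, 1, 2, 2, 1],
    [(1, 14, 1), (2, 16, 1), (3, 18, 1), (4, 20, 1), (12, 25, -1), (15, 26, -1)]),
   ([1, 1, 2, 2, 1, 1],
    [(0, 13, -1), (1, 15, -1), (5, 22, -1), (6, 23, -1), (8, 24, -1), (14, 26, 1)]),
   ([1, 1, 1, 2, 2, 1],
    [(0, 14, -1), (2, 17, 1), (3, 19, 1), (4, 21, 1), (10, 25, 1), (13, 26, 1)]),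
   ([1, 1, 2, 2, 2, 1],
    [(0, 16, 1), (1, 17, 1), (3, 22, -1), (4, 23, -1), (8, 25, 1), (11, 26, 1)]),
   ([1, 1, 2, 3, 2, 1],
    [(0, 18, -1), (1, 19, -1), (2, 22, -1), (4, 24, 1), (6, 25, 1), (9, 26, 1)]),
   ([1, 2, 2, 3, 2, 1], [(0, 20, 1), (1, 21, 1), (2, 23, 1), (3, 24, 1), (5, 25, 1), (7, 26, 1)])]

/-- The diagonal matrix `[E, F]`, where `F` is the transpose of `E`. -/
def corootMat (l : SparseMat) : SparseMat :=
  l.map (fun t => (t.1, t.1, 1)) ++ l.map fun t => (t.2.1, t.2.1, -1)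

/-- The Chevalley basis of `E₆` in the 27-dimensional representation: 36 positive root vectors,
36 negative root vectors and 6 simple coroots. -/
def basisMat (k : ℕ) : SparseMat :=
  bif Nat.blt k 36 then (posTable.getD k ([], [])).2
  else bif Nat.blt k 72 then SparseMat.transpose (posTable.getD (k - 36) ([], [])).2
  else corootMat (posTable.getD (k - 72) ([], [])).2

/-- The coefficients of the roots of the basis vectors (zero for the coroots). -/
def root (k i : ℕ) : ℤ :=
  bif Nat.blt k 36 then (posTable.getD k ([], [])).1.getD i 0
  else bif Nat.blt k 72 then -(posTable.getD (k - 36) ([], [])).1.getD i 0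
  else 0

/-- Functionals on matrices that are dual to the Chevalley basis. -/
def basisDual (k : ℕ) : SparseMat :=
  bif Nat.blt k 72 then (basisMat k).take 1
  else ([[(0, 0, 1)], [(0, 0, 1), (20, 20, -1)], [(0, 0, 1), (1, 1, 1)],
    [(0, 0, 1), (1, 1, 1), (2, 2, 1)], [(25, 25, -1), (26, 26, -1)], [(26, 26, -1)]] :
      List SparseMat).getD (k - 72) []

/-- Whether the leading term of `X` is at the position of a term of `l`, or both `X` and `l` start
with a diagonal term. -/
def related : SparseMat → SparseMat → Bool
  | t :: l, u :: _ => (Nat.beq t.1 t.2.1 && Nat.beq u.1 u.2.1) ||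
      (t :: l).any fun t => Nat.beq t.1 u.1 && Nat.beq t.2.1 u.2.1
  | _, _ => false

/-- The projection of a formal sum, assumed to be in one root space or diagonal, to the span of the
Chevalley basis. -/
def project (X : SparseMat) : SparseMat :=
  (List.range 78).foldr (fun l r => bif related (basisMat l) X.reduce then
    SparseMat.smul ((basisDual l).pair X) (basisMat l) ++ r else r) []

/-- A decision procedure for membership in the span of the Chevalley basis. -/
def inSpan (X : SparseMat) : Bool := X.same (project X)

/-- The Cartan matrix of `E₆`. -/
def cartan (i j : ℕ) : ℤ :=
  ((([[2, 0, -1, 0, 0, 0], [0, 2, 0, -1, 0, 0], [-1, 0, 2, -1, 0, 0], [0, -1, -1, 2, -1, 0],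
    [0, 0, 0, -1, 2, -1], [0, 0, 0, 0, -1, 2]] : List (List ℤ)).getD i []).getD j 0)

lemma check_dual : ((List.range 78).all fun k => (List.range 78).all fun l =>
    (basisDual k).pair (basisMat l) == bif k == l then 1 else 0) = true := by decide +kernel

lemma check_dual_lt : ((List.range 78).all fun k =>
    (basisDual k).all fun t => Nat.blt t.1 27 && Nat.blt t.2.1 27) = true := by decide +kernel

lemma check_span : ((List.range 6).all fun i => (List.range 78).all fun k =>
    inSpan ((basisMat i).bracket (basisMat k))) = true := by decide +kernel

lemma check_weight : ((List.range 6).all fun j => (List.range 36).all fun k =>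
    ((basisMat (72 + j)).bracket (basisMat k)).same (SparseMat.smul
      (((List.range 6).map fun i => cartan j i * root k i).sum) (basisMat k))) = true := by
  decide +kernel

lemma check_cartan : ((List.range 6).all fun i => (List.range 6).all fun j =>
    ((basisMat (72 + i)).bracket (basisMat (72 + j))).same []) = true := by decide +kernel

lemma check_EF : ((List.range 6).all fun i => (List.range 6).all fun j =>
    ((basisMat i).bracket (basisMat (36 + j))).same
      (bif i == j then basisMat (72 + i) else [])) = true := by decide +kernel

/-- The Serre relations for the Chevalley generators. -/
def serre (s : ℕ) (i j : ℕ) : Bool :=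
  bif cartan i j == -1 then ((basisMat (s + i)).bracket
    ((basisMat (s + i)).bracket (basisMat (s + j)))).same []
  else ((basisMat (s + i)).bracket (basisMat (s + j))).same []

lemma check_serre : ((List.range 6).all fun i => (List.range 6).all fun j =>
    serre 0 i j && serre 36 i j) = true := by decide +kernel

lemma all_range {n : ℕ} {p : ℕ → Bool} (h : ((List.range n).all p) = true) {k : ℕ} (hk : k < n) :
    p k = true :=
  List.all_eq_true.mp h k (List.mem_range.mpr hk)

lemma blt_true {a b : ℕ} (h : a < b) : Nat.blt a b = true := Nat.ble_eq_true_of_le h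

lemma blt_false {a b : ℕ} (h : b ≤ a) : Nat.blt a b = false := by
  rw [← Bool.not_eq_true, Nat.blt_eq]
  omega

/-- The complex vector space spanned by the Chevalley basis. -/
noncomputable def chevalleySpan : Submodule ℂ (Matrix (Fin 27) (Fin 27) ℂ) :=
  Submodule.span ℂ (Set.range fun k : Fin 78 => toMatrix (basisMat k))

lemma toMatrix_transpose (l : SparseMat) : toMatrix (transpose l) = (toMatrix l).transpose := by
  ext i j
  simp [toMatrix, coeff_transpose]

lemma transpose_transpose (l : SparseMat) : transpose (transpose l) = l := by
  simp [transpose, Function.comp_def]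

lemma transpose_corootMat (l : SparseMat) : transpose (corootMat l) = corootMat l := by
  simp [transpose, corootMat, Function.comp_def]

lemma basisMat_neg {k : ℕ} (hk : k < 36) :
    basisMat (36 + k) = transpose (basisMat k) := by
  have h1 : Nat.blt (36 + k) 36 = false := blt_false (by omega)
  have h2 : Nat.blt (36 + k) 72 = true := blt_true (by omega)
  simp [basisMat, blt_true hk, h1, h2]

lemma basisMat_coroot (k : ℕ) :
    basisMat (72 + k) = corootMat (posTable.getD k ([], [])).2 := by
  have h1 : Nat.blt (72 + k) 36 = false := blt_false (by omega)
  have h2 : Nat.blt (72 + k) 72 = false := blt_false (by omega)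
  simp [basisMat, h1, h2]

lemma exists_transpose_basisMat (k : Fin 78) :
    ∃ l : Fin 78, (toMatrix (basisMat k)).transpose = toMatrix (basisMat l) := by
  obtain ⟨k, hk⟩ := k
  simp only
  by_cases h1 : k < 36
  · exact ⟨⟨36 + k, by omega⟩, by rw [basisMat_neg h1, toMatrix_transpose]⟩
  by_cases h2 : k < 72
  · obtain ⟨j, rfl⟩ : ∃ j, k = 36 + j := ⟨k - 36, by omega⟩
    refine ⟨⟨j, by omega⟩, ?_⟩
    rw [basisMat_neg (by omega), ← toMatrix_transpose, transpose_transpose]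
  · obtain ⟨j, rfl⟩ : ∃ j, k = 72 + j := ⟨k - 72, by omega⟩
    refine ⟨⟨72 + j, by omega⟩, ?_⟩
    rw [basisMat_coroot, ← toMatrix_transpose, transpose_corootMat]

lemma basisMat_mem (k : Fin 78) : toMatrix (basisMat k) ∈ chevalleySpan :=
  Submodule.subset_span ⟨k, rfl⟩

lemma transpose_mem {M : Matrix (Fin 27) (Fin 27) ℂ} (hM : M ∈ chevalleySpan) :
    M.transpose ∈ chevalleySpan := by
  induction hM using Submodule.span_induction with
  | mem x hx =>
    obtain ⟨k, rfl⟩ := hx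
    obtain ⟨l, hl⟩ := exists_transpose_basisMat k
    simp only [hl, basisMat_mem]
  | zero => simp
  | add x y _ _ hx hy => rw [Matrix.transpose_add]; exact add_mem hx hy
  | smul c x _ hx => rw [Matrix.transpose_smul]; exact Submodule.smul_mem _ _ hx

lemma project_mem (X : SparseMat) : toMatrix (project X) ∈ chevalleySpan := by
  have : ∀ L : List ℕ, (∀ l ∈ L, l < 78) → toMatrix (L.foldr (fun l r =>
      bif related (basisMat l) X.reduce then
        SparseMat.smul ((basisDual l).pair X) (basisMat l) ++ r else r) []) ∈ chevalleySpan := by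
    intro L
    induction L with
    | nil => simp
    | cons a L ih =>
      intro h
      have hL := ih fun l hl => h l (by simp [hl])
      rw [List.foldr_cons]
      cases related (basisMat a) X.reduce
      · exact hL
      · rw [cond_true, toMatrix_append, toMatrix_smul]
        exact add_mem (Submodule.smul_mem _ _ (basisMat_mem ⟨a, h a (by simp)⟩)) hL
  exact this _ fun l hl => List.mem_range.mp hl

lemma lie_E_mem {i : ℕ} (hi : i < 6) {M : Matrix (Fin 27) (Fin 27) ℂ} (hM : M ∈ chevalleySpan) :
    ⁅toMatrix (basisMat i), M⁆ ∈ chevalleySpan := by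
  induction hM using Submodule.span_induction with
  | mem x hx =>
    obtain ⟨k, rfl⟩ := hx
    simp only
    rw [← toMatrix_bracket, toMatrix_eq_of_same (all_range (all_range check_span hi) k.2)]
    exact project_mem _
  | zero => simp
  | add x y _ _ hx hy => rw [lie_add]; exact add_mem hx hy
  | smul c x _ hx => rw [lie_smul]; exact Submodule.smul_mem _ _ hx

lemma transpose_lie (M N : Matrix (Fin 27) (Fin 27) ℂ) :
    ⁅M, N⁆.transpose = ⁅N.transpose, M.transpose⁆ := by
  simp [Ring.lie_def]

lemma lie_F_mem {i : ℕ} (hi : i < 6) {M : Matrix (Fin 27) (Fin 27) ℂ} (hM : M ∈ chevalleySpan) :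
    ⁅toMatrix (basisMat (36 + i)), M⁆ ∈ chevalleySpan := by
  have := transpose_mem (lie_E_mem hi (transpose_mem hM))
  rw [transpose_lie, Matrix.transpose_transpose, ← toMatrix_transpose,
    ← basisMat_neg (by omega)] at this
  rw [← lie_skew]
  exact neg_mem this

lemma lie_coroot {j : ℕ} (hj : j < 6) (k : Fin 78) :
    ⁅toMatrix (basisMat (72 + j)), toMatrix (basisMat k)⁆ =
      ((((List.range 6).map fun i => cartan j i * root k i).sum : ℤ) : ℂ) •
        toMatrix (basisMat k) := by
  obtain ⟨k, hk⟩ := k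
  have key : ∀ k < 36, ⁅toMatrix (basisMat (72 + j)), toMatrix (basisMat k)⁆ =
      ((((List.range 6).map fun i => cartan j i * root k i).sum : ℤ) : ℂ) •
        toMatrix (basisMat k) := fun k hk => by
    rw [← toMatrix_bracket, toMatrix_eq_of_same (all_range (all_range check_weight hj) hk),
      toMatrix_smul]
  by_cases h1 : k < 36
  · exact key k h1
  simp only
  by_cases h2 : k < 72
  · obtain ⟨l, rfl⟩ : ∃ l, k = 36 + l := ⟨k - 36, by omega⟩
    have hl : l < 36 := by omega
    have hr : ∀ i, root (36 + l) i = -root l i := fun i => by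
      have h1 : Nat.blt (36 + l) 36 = false := blt_false (by omega)
      have h2 : Nat.blt (36 + l) 72 = true := blt_true (by omega)
      have h3 : Nat.blt l 36 = true := blt_true (by omega)
      simp [root, h1, h2, h3]
    have hh : (toMatrix (basisMat (72 + j))).transpose = toMatrix (basisMat (72 + j)) := by
      rw [basisMat_coroot, ← toMatrix_transpose, transpose_corootMat]
    have := congrArg Matrix.transpose (key l hl)
    rw [transpose_lie, hh, ← toMatrix_transpose, ← basisMat_neg hl, ← lie_skew,
      Matrix.transpose_smul, ← toMatrix_transpose, ← basisMat_neg hl] at this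
    rw [neg_eq_iff_eq_neg.mp this, ← neg_smul]
    congr 1
    simp only [hr, List.range_succ, List.range_zero, List.map_append, List.map_nil, List.map_cons,
      List.sum_append,
      List.sum_cons, List.sum_nil]
    push_cast
    ring
  · obtain ⟨l, rfl⟩ : ∃ l, k = 72 + l := ⟨k - 72, by omega⟩
    have hr : ∀ i, root (72 + l) i = 0 := fun i => by
      have h1 : Nat.blt (72 + l) 36 = false := blt_false (by omega)
      have h2 : Nat.blt (72 + l) 72 = false := blt_false (by omega)
      simp [root, h1, h2]
    rw [← toMatrix_bracket,
      toMatrix_eq_of_same (all_range (all_range check_cartan hj) (show l < 6 by omega))]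
    simp [hr]

/-- A faithful 27-dimensional representation of a Lie algebra whose image is spanned by the
Chevalley basis of `E₆`. -/
structure Pinning (L : Type*) [LieRing L] [LieAlgebra ℂ L] where
  /-- The representation. -/
  rep : L →ₗ[ℂ] Matrix (Fin 27) (Fin 27) ℂ
  map_lie : ∀ x y, rep ⁅x, y⁆ = rep x * rep y - rep y * rep x
  injective : Function.Injective rep
  range_eq : LinearMap.range rep = chevalleySpan

/-- The images of the generators of `E₆` under the 27-dimensional representation. -/
noncomputable def genMat : CartanMatrix.Generators (Fin 6) → Matrix (Fin 27) (Fin 27) ℂ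
  | .H i => toMatrix (basisMat (72 + i))
  | .E i => toMatrix (basisMat i)
  | .F i => toMatrix (basisMat (36 + i))

lemma cartanMatrix_eq (i j : Fin 6) : CartanMatrix.E₆ i j = cartan i j := by
  fin_cases i <;> fin_cases j <;> rfl

lemma sum_cartan_root (i j : Fin 6) :
    ((List.range 6).map fun l => cartan i l * root j l).sum = cartan i j ∧
    ((List.range 6).map fun l => cartan i l * root (36 + j) l).sum = -cartan i j := by
  revert i j
  decide +kernel

lemma toNat_neg_cartan (i j : Fin 6) :
    (-cartan i j).toNat = bif cartan i j == -1 then 1 else 0 := by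
  revert i j
  decide

lemma toIdeal_le : CartanMatrix.Relations.toIdeal ℂ CartanMatrix.E₆ ≤
    (FreeLieAlgebra.lift ℂ genMat).ker := by
  have serre_zero : ∀ (s : ℕ) (i j : Fin 6) (X : Fin 6 → FreeLieAlgebra ℂ _),
      (∀ k : Fin 6, FreeLieAlgebra.lift ℂ genMat (X k) = toMatrix (basisMat (s + k))) →
      serre s i j = true → FreeLieAlgebra.lift ℂ genMat
        (((LieAlgebra.ad ℂ _ (X i)) ^ (-CartanMatrix.E₆ i j).toNat) ⁅X i, X j⁆) = 0 := by
    intro s i j X hX hs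
    rw [cartanMatrix_eq, toNat_neg_cartan]
    rw [serre] at hs
    cases h : (cartan i j == -1)
    · rw [h, cond_false] at hs
      rw [cond_false, pow_zero, Module.End.one_apply, LieHom.map_lie, hX, hX, ← toMatrix_bracket,
        toMatrix_eq_of_same hs, toMatrix_nil]
    · rw [h, cond_true] at hs
      rw [cond_true, pow_one, LieAlgebra.ad_apply, LieHom.map_lie, LieHom.map_lie, hX, hX,
        ← toMatrix_bracket, ← toMatrix_bracket, toMatrix_eq_of_same hs, toMatrix_nil]
  refine (LieSubmodule.lieSpan_le).mpr ?_
  rintro x (((((⟨⟨i, j⟩, rfl⟩ | ⟨⟨i, j⟩, rfl⟩) | ⟨⟨i, j⟩, rfl⟩) | ⟨⟨i, j⟩, rfl⟩) |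
    ⟨⟨i, j⟩, rfl⟩) | ⟨⟨i, j⟩, rfl⟩) <;>
    rw [SetLike.mem_coe, LieHom.mem_ker]
  · simp only [CartanMatrix.Relations.HH, Function.uncurry, Function.comp, LieHom.map_lie,
      FreeLieAlgebra.lift_of_apply, genMat]
    rw [← toMatrix_bracket, toMatrix_eq_of_same (all_range (all_range check_cartan i.2) j.2),
      toMatrix_nil]
  · have := toMatrix_eq_of_same (all_range (all_range check_EF i.2) j.2)
    rw [toMatrix_bracket] at this
    simp only [CartanMatrix.Relations.EF, Function.uncurry, Function.comp]
    split_ifs with h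
    · simp only [map_sub, LieHom.map_lie, FreeLieAlgebra.lift_of_apply, genMat]
      subst h
      rw [this]
      simp
    · simp only [LieHom.map_lie, FreeLieAlgebra.lift_of_apply, genMat]
      have h2 : ((i : ℕ) == (j : ℕ)) = false := by simpa using fun h3 => h (Fin.ext h3)
      rw [this, h2]
      simp
  · simp only [CartanMatrix.Relations.HE, Function.uncurry, Function.comp, map_sub, LieHom.map_lie,
      FreeLieAlgebra.lift_of_apply, genMat, map_zsmul]
    have := lie_coroot i.2 ⟨j, by omega⟩
    simp only [(sum_cartan_root i j).1] at this
    rw [this, cartanMatrix_eq, Int.cast_smul_eq_zsmul, sub_self]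
  · simp only [CartanMatrix.Relations.HF, Function.uncurry, Function.comp, map_add, LieHom.map_lie,
      FreeLieAlgebra.lift_of_apply, genMat, map_zsmul]
    have := lie_coroot i.2 ⟨36 + j, by omega⟩
    simp only [(sum_cartan_root i j).2] at this
    rw [this, cartanMatrix_eq, Int.cast_smul_eq_zsmul, neg_smul, neg_add_cancel]
  · have hs := all_range (all_range check_serre i.2) j.2
    rw [Bool.and_eq_true] at hs
    exact serre_zero 0 i j (fun k => FreeLieAlgebra.of ℂ (.E k))
      (fun k => by rw [FreeLieAlgebra.lift_of_apply, genMat, zero_add]) hs.1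
  · have hs := all_range (all_range check_serre i.2) j.2
    rw [Bool.and_eq_true] at hs
    exact serre_zero 36 i j (fun k => FreeLieAlgebra.of ℂ (.F k))
      (fun k => by rw [FreeLieAlgebra.lift_of_apply, genMat]) hs.2

/-- The positive roots of height at least two are obtained by adding a simple root to a
positive root; the entries list the simple root and the smaller root. -/
def parent (k : ℕ) : ℕ × ℕ :=
  ([(2, 0), (3, 1), (3, 2), (4, 3), (5, 4), (3, 6), (2, 7), (4, 7), (4, 8), (5, 9), (1, 11),
    (4, 11), (4, 12), (5, 13), (5, 14), (4, 16), (5, 17), (3, 18), (5, 18), (3, 21), (5, 21),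
    (5, 23), (2, 25), (5, 25), (4, 27), (5, 28), (4, 29), (4, 31), (3, 33), (1, 34)] :
      List (ℕ × ℕ)).getD (k - 6) (0, 0)

lemma check_parent : ((List.range 36).all fun k => Nat.blt k 6 ||
    (Nat.blt (parent k).1 6 && Nat.blt (parent k).2 k &&
      ((basisMat (parent k).1).bracket (basisMat (parent k).2)).same (basisMat k))) = true := by
  decide +kernel

/-- The 27-dimensional representation of the free Lie algebra on the generators of `E₆`. -/
noncomputable def freeRep : FreeLieAlgebra ℂ (CartanMatrix.Generators (Fin 6)) →ₗ⁅ℂ⁆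
    Matrix (Fin 27) (Fin 27) ℂ :=
  FreeLieAlgebra.lift ℂ genMat

lemma freeRep_of (x : CartanMatrix.Generators (Fin 6)) :
    freeRep (FreeLieAlgebra.of ℂ x) = genMat x := by
  rw [freeRep, FreeLieAlgebra.lift_of_apply]

lemma freeRep_mem_aux (x : FreeLieAlgebra ℂ (CartanMatrix.Generators (Fin 6))) :
    freeRep x ∈ chevalleySpan ∧ ∀ M ∈ chevalleySpan, ⁅freeRep x, M⁆ ∈ chevalleySpan := by
  let K : LieSubalgebra ℂ (FreeLieAlgebra ℂ (CartanMatrix.Generators (Fin 6))) :=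
    { carrier := {x | freeRep x ∈ chevalleySpan ∧
        ∀ M ∈ chevalleySpan, ⁅freeRep x, M⁆ ∈ chevalleySpan}
      add_mem' := fun {a b} ha hb => ⟨by rw [map_add]; exact add_mem ha.1 hb.1, fun M hM => by
        rw [map_add, add_lie]; exact add_mem (ha.2 M hM) (hb.2 M hM)⟩
      zero_mem' := ⟨by simp, fun M _ => by simp⟩
      smul_mem' := fun c a ha => ⟨by rw [map_smul]; exact Submodule.smul_mem _ _ ha.1,
        fun M hM => by rw [map_smul, smul_lie]; exact Submodule.smul_mem _ _ (ha.2 M hM)⟩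
      lie_mem' := fun {a b} ha hb => ⟨by rw [LieHom.map_lie]; exact ha.2 _ hb.1, fun M hM => by
        rw [LieHom.map_lie, lie_lie]
        exact sub_mem (ha.2 _ (hb.2 M hM)) (hb.2 _ (ha.2 M hM))⟩ }
  have hE : ∀ i, FreeLieAlgebra.of ℂ (.E i) ∈ K := fun i => ⟨by
    rw [freeRep_of]
    exact basisMat_mem ⟨i, by omega⟩, fun M hM => by rw [freeRep_of]; exact lie_E_mem i.2 hM⟩
  have hF : ∀ i, FreeLieAlgebra.of ℂ (.F i) ∈ K := fun i => ⟨by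
    rw [freeRep_of]
    exact basisMat_mem ⟨36 + i, by omega⟩, fun M hM => by rw [freeRep_of]; exact lie_F_mem i.2 hM⟩
  have hH : ∀ i, FreeLieAlgebra.of ℂ (.H i) ∈ K := fun i => by
    have h1 := K.lie_mem (hE i) (hF i)
    have h2 : freeRep ⁅FreeLieAlgebra.of ℂ (CartanMatrix.Generators.E i),
        FreeLieAlgebra.of ℂ (CartanMatrix.Generators.F i)⁆ =
          freeRep (FreeLieAlgebra.of ℂ (CartanMatrix.Generators.H i)) := by
      rw [LieHom.map_lie, freeRep_of, freeRep_of, freeRep_of, genMat, genMat, genMat,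
        ← toMatrix_bracket, toMatrix_eq_of_same (all_range (all_range check_EF i.2) i.2)]
      simp
    exact ⟨h2 ▸ h1.1, h2 ▸ h1.2⟩
  let g : CartanMatrix.Generators (Fin 6) → K
    | .E i => ⟨_, hE i⟩
    | .F i => ⟨_, hF i⟩
    | .H i => ⟨_, hH i⟩
  have hg : K.incl.comp (FreeLieAlgebra.lift ℂ g) = LieHom.id := by
    ext x
    rw [LieHom.comp_apply, FreeLieAlgebra.lift_of_apply]
    cases x <;> rfl
  have := (FreeLieAlgebra.lift ℂ g x).2
  have h2 : ((FreeLieAlgebra.lift ℂ g x : K) : FreeLieAlgebra ℂ _) = x := LieHom.congr_fun hg x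
  rwa [h2] at this

lemma basisMat_mem_range (k : Fin 78) : toMatrix (basisMat k) ∈ freeRep.range := by
  have hE : ∀ i < 6, toMatrix (basisMat i) ∈ freeRep.range := fun i hi =>
    ⟨FreeLieAlgebra.of ℂ (.E ⟨i, hi⟩), freeRep_of _⟩
  have hF : ∀ i < 6, toMatrix (basisMat (36 + i)) ∈ freeRep.range := fun i hi =>
    ⟨FreeLieAlgebra.of ℂ (.F ⟨i, hi⟩), freeRep_of _⟩
  have hpos : ∀ k < 36, toMatrix (basisMat k) ∈ freeRep.range ∧
      toMatrix (basisMat (36 + k)) ∈ freeRep.range := by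
    intro k
    induction k using Nat.strong_induction_on with
    | _ k ih =>
      intro hk
      by_cases h6 : k < 6
      · exact ⟨hE k h6, hF k h6⟩
      have hp := all_range check_parent hk
      rw [blt_false (by omega), Bool.false_or, Bool.and_eq_true, Bool.and_eq_true, Nat.blt_eq,
        Nat.blt_eq] at hp
      obtain ⟨⟨h1, h2⟩, h3⟩ := hp
      have h4 := toMatrix_eq_of_same h3
      have ihp := ih _ h2 (by omega)
      rw [toMatrix_bracket] at h4
      refine ⟨h4 ▸ freeRep.range.lie_mem (hE _ h1) ihp.1, ?_⟩
      have h5 := congrArg Matrix.transpose h4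
      rw [transpose_lie, ← toMatrix_transpose, ← toMatrix_transpose, ← toMatrix_transpose,
        ← basisMat_neg hk, ← basisMat_neg (by omega), ← basisMat_neg (by omega)] at h5
      exact h5 ▸ freeRep.range.lie_mem ihp.2 (hF _ h1)
  obtain ⟨k, hk⟩ := k
  by_cases h1 : k < 36
  · exact (hpos k h1).1
  by_cases h2 : k < 72
  · obtain ⟨j, rfl⟩ : ∃ j, k = 36 + j := ⟨k - 36, by omega⟩
    exact (hpos j (by omega)).2
  · obtain ⟨j, rfl⟩ : ∃ j, k = 72 + j := ⟨k - 72, by omega⟩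
    exact ⟨FreeLieAlgebra.of ℂ (.H ⟨j, by omega⟩), freeRep_of _⟩

lemma range_freeRep : LinearMap.range freeRep.toLinearMap = chevalleySpan := by
  apply le_antisymm
  · rintro _ ⟨x, rfl⟩
    exact (freeRep_mem_aux x).1
  · rw [chevalleySpan, Submodule.span_le]
    rintro _ ⟨k, rfl⟩
    exact basisMat_mem_range k

lemma basisMat_ne_zero (k : Fin 78) : toMatrix (basisMat k) ≠ 0 := by
  intro h
  have h1 := functional_toMatrix (all_range check_dual_lt k.2) (basisMat k)
  have h2 := all_range (all_range check_dual k.2) k.2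
  rw [h, map_zero] at h1
  simp only [BEq.rfl, cond_true, beq_iff_eq] at h2
  rw [h2] at h1
  simp at h1

/-- A simple Lie algebra of type `E₆` has a pinning. -/
lemma nonempty_pinning (L : Type*) [LieRing L] [LieAlgebra ℂ L] [LieAlgebra.IsSimple ℂ L]
    (e : L ≃ₗ⁅ℂ⁆ LieAlgebra.e₆ ℂ) : Nonempty (Pinning L) := by
  let I := CartanMatrix.Relations.toIdeal ℂ CartanMatrix.E₆
  let e' : L ≃ₗ⁅ℂ⁆ (FreeLieAlgebra ℂ (CartanMatrix.Generators (Fin 6)) ⧸ I) := e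
  have hI : I.toSubmodule ≤ LinearMap.ker freeRep.toLinearMap := toIdeal_le
  let r : L →ₗ[ℂ] Matrix (Fin 27) (Fin 27) ℂ :=
    (I.toSubmodule.liftQ freeRep.toLinearMap hI) ∘ₗ (e' : L →ₗ[ℂ] _)
  have hr : ∀ x y, e' x = LieSubmodule.Quotient.mk y → r x = freeRep y := fun x y hxy => by
    change I.toSubmodule.liftQ freeRep.toLinearMap hI (e' x) = _
    rw [hxy]
    rfl
  have hsurj : ∀ x, ∃ y, e' x = LieSubmodule.Quotient.mk y := fun x => by
    obtain ⟨y, hy⟩ := LieSubmodule.Quotient.surjective_mk' I (e' x)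
    exact ⟨y, hy.symm⟩
  let R : L →ₗ⁅ℂ⁆ Matrix (Fin 27) (Fin 27) ℂ :=
    { r with
      map_lie' := fun {x y} => by
        obtain ⟨x', hx⟩ := hsurj x
        obtain ⟨y', hy⟩ := hsurj y
        have hxy : e' ⁅x, y⁆ = LieSubmodule.Quotient.mk ⁅x', y'⁆ := by
          rw [LieEquiv.map_lie, hx, hy, LieSubmodule.Quotient.mk_bracket]
        change r ⁅x, y⁆ = ⁅r x, r y⁆
        rw [hr _ _ hxy, hr _ _ hx, hr _ _ hy, LieHom.map_lie] }
  have hmem : ∀ y, freeRep y ∈ LinearMap.range r := fun y =>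
    ⟨e'.symm (LieSubmodule.Quotient.mk y), hr _ _ (by simp)⟩
  have hrange : LinearMap.range r = chevalleySpan := by
    rw [← range_freeRep]
    apply le_antisymm
    · rintro _ ⟨x, rfl⟩
      obtain ⟨y, hy⟩ := hsurj x
      exact ⟨y, (hr _ _ hy).symm⟩
    · rintro _ ⟨y, rfl⟩
      exact hmem y
  have hker : R.ker = ⊥ := by
    rcases LieAlgebra.IsSimple.eq_bot_or_eq_top R.ker with h | h
    · exact h
    · exfalso
      have h0 : toMatrix (basisMat (0 : Fin 78)) ∈ LinearMap.range r := by
        rw [hrange]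
        exact basisMat_mem 0
      obtain ⟨x, hx⟩ := h0
      have : x ∈ R.ker := by rw [h]; trivial
      exact basisMat_ne_zero 0 (hx.symm.trans (LieHom.mem_ker.mp this))
  exact ⟨⟨r, fun x y => R.map_lie x y, R.ker_eq_bot.mp hker, hrange⟩⟩

end E6

end

namespace E6

open SparseMat

/-- The inverse of the Cartan matrix of `E₆`, multiplied by 3. -/
def cartanInv (i j : ℕ) : ℤ :=
  ((([[4, 3, 5, 6, 4, 2], [3, 6, 6, 9, 6, 3], [5, 6, 10, 12, 8, 4], [6, 9, 12, 18, 12, 6],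
    [4, 6, 8, 12, 10, 5], [2, 3, 4, 6, 5, 4]] : List (List ℤ)).getD i []).getD j 0)

lemma sum_cartanInv_cartan (i l : Fin 6) :
    ∑ j : Fin 6, cartanInv i j * cartan j l = if i = l then 3 else 0 := by
  revert i l
  decide +kernel

lemma sum_cartan_cartanInv (i l : Fin 6) :
    ∑ j : Fin 6, cartan i j * cartanInv j l = if i = l then 3 else 0 := by
  revert i l
  decide +kernel

/-- The value of the linear form with values `n` on the simple roots at the root of the `k`-th
basis vector. -/
def wt {R : Type*} [CommRing R] (n : Fin 6 → R) (k : Fin 78) : R :=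
  ∑ i : Fin 6, n i * (root k i : R)

/-- The formal sum of matrix units of an integral combination of basis vectors. -/
def vecMat (l : List (Fin 78 × ℤ)) : SparseMat :=
  l.foldr (fun t r => SparseMat.smul t.2 (basisMat t.1) ++ r) []

lemma linearIndependent_basisMat :
    LinearIndependent ℂ fun k : Fin 78 => toMatrix (basisMat k) := by
  rw [Fintype.linearIndependent_iff]
  intro g hg k
  have h1 := congrArg (functional (basisDual k)) hg
  rw [map_sum, map_zero, Finset.sum_eq_single k] at h1
  · have h2 := all_range (all_range check_dual k.2) k.2
    simp only [BEq.rfl, cond_true, beq_iff_eq] at h2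
    rw [map_smul, functional_toMatrix (all_range check_dual_lt k.2), h2] at h1
    simpa using h1
  · intro l _ hl
    have h2 := all_range (all_range check_dual k.2) l.2
    have h3 : ((k : ℕ) == (l : ℕ)) = false := by
      simpa using fun h => hl (Fin.ext h.symm)
    simp only [h3, cond_false, beq_iff_eq] at h2
    rw [map_smul, functional_toMatrix (all_range check_dual_lt k.2), h2]
    simp
  · simp

namespace Pinning

variable {L : Type*} [LieRing L] [LieAlgebra ℂ L] (P : Pinning L)

/-- The linear equivalence of a Lie algebra with a pinning to the span of the Chevalley basis. -/
noncomputable def equivSpan : L ≃ₗ[ℂ] chevalleySpan :=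
  (LinearEquiv.ofInjective P.rep P.injective).trans (LinearEquiv.ofEq _ _ P.range_eq)

/-- The Chevalley basis of its span. -/
noncomputable def _root_.E6.chevalleyBasis : Module.Basis (Fin 78) ℂ chevalleySpan :=
  Module.Basis.span linearIndependent_basisMat

/-- The Chevalley basis determined by a pinning. -/
noncomputable def basis : Module.Basis (Fin 78) ℂ L :=
  chevalleyBasis.map P.equivSpan.symm

lemma rep_basis (k : Fin 78) : P.rep (P.basis k) = toMatrix (basisMat k) := by
  have h1 : P.equivSpan (P.basis k) = chevalleyBasis k := by
    rw [basis, Module.Basis.map_apply, LinearEquiv.apply_symm_apply]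
  exact (congrArg Subtype.val h1).trans
    (congrArg Subtype.val (Module.Basis.span_apply linearIndependent_basisMat k))

/-- Integral combinations of the Chevalley basis. -/
noncomputable def vec (l : List (Fin 78 × ℤ)) : L :=
  l.foldr (fun t r => (t.2 : ℂ) • P.basis t.1 + r) 0

@[simp] lemma vec_nil : P.vec [] = 0 := rfl

lemma vec_cons (t : Fin 78 × ℤ) (l : List (Fin 78 × ℤ)) :
    P.vec (t :: l) = (t.2 : ℂ) • P.basis t.1 + P.vec l := rfl

lemma vec_singleton (k : Fin 78) : P.vec [(k, 1)] = P.basis k := by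
  simp [vec_cons]

lemma rep_vec (l : List (Fin 78 × ℤ)) : P.rep (P.vec l) = toMatrix (vecMat l) := by
  induction l with
  | nil => simp [vecMat]
  | cons t l ih =>
    rw [vec_cons, map_add, map_smul, rep_basis, ih]
    change _ = toMatrix (SparseMat.smul t.2 (basisMat t.1) ++ vecMat l)
    rw [toMatrix_append, toMatrix_smul]

/-- Brackets of integral combinations of the Chevalley basis can be computed with matrices. -/
lemma lie_vec {l m n : List (Fin 78 × ℤ)}
    (h : ((vecMat l).bracket (vecMat m)).same (vecMat n) = true) :
    ⁅P.vec l, P.vec m⁆ = P.vec n := by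
  apply P.injective
  rw [P.map_lie, rep_vec, rep_vec, rep_vec, ← toMatrix_eq_of_same h, toMatrix_bracket,
    Ring.lie_def]

lemma lie_basis {i j : Fin 78} {n : List (Fin 78 × ℤ)}
    (h : ((vecMat [(i, 1)]).bracket (vecMat [(j, 1)])).same (vecMat n) = true) :
    ⁅P.basis i, P.basis j⁆ = P.vec n := by
  rw [← vec_singleton, ← vec_singleton, P.lie_vec h]

lemma lie_basis_coroot (j : Fin 6) (k : Fin 78) :
    ⁅P.basis (Fin.natAdd 72 j), P.basis k⁆ =
      (∑ i : Fin 6, (cartan j i : ℂ) * root k i) • P.basis k := by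
  apply P.injective
  have := lie_coroot j.2 k
  rw [P.map_lie, map_smul, rep_basis, rep_basis, ← Ring.lie_def, Fin.natAdd_mk, this]
  congr 1
  simp only [List.range_succ, List.range_zero, List.map_append, List.map_nil, List.map_cons,
    List.sum_append, List.sum_cons, List.sum_nil, Fin.sum_univ_six]
  push_cast
  simp

/-- The element of the standard Cartan subalgebra with given values on the simple roots. -/
noncomputable def tor (n : Fin 6 → ℂ) : L :=
  ∑ j : Fin 6, (∑ i : Fin 6, n i * (cartanInv i j / 3 : ℂ)) • P.basis (Fin.natAdd 72 j)

lemma lie_tor (n : Fin 6 → ℂ) (k : Fin 78) : ⁅P.tor n, P.basis k⁆ = wt n k • P.basis k := by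
  have h : ∀ i l : Fin 6, ∑ j : Fin 6, (cartanInv i j : ℂ) * cartan j l = if i = l then 3 else 0 :=
    fun i l => by exact_mod_cast sum_cartanInv_cartan i l
  simp only [tor, sum_lie, smul_lie, lie_basis_coroot, smul_smul, ← Finset.sum_smul, wt]
  congr 1
  calc _ = ∑ j : Fin 6, ∑ i : Fin 6, ∑ l : Fin 6,
        n i / 3 * root k l * (cartanInv i j * cartan j l) := by
        simp only [Finset.sum_mul_sum]
        refine Finset.sum_congr rfl fun j _ => Finset.sum_congr rfl fun i _ =>
          Finset.sum_congr rfl fun l _ => by ring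
    _ = ∑ i : Fin 6, ∑ l : Fin 6, n i / 3 * root k l *
        ∑ j : Fin 6, (cartanInv i j : ℂ) * cartan j l := by
        rw [Finset.sum_comm]
        refine Finset.sum_congr rfl fun i _ => ?_
        rw [Finset.sum_comm]
        simp only [Finset.mul_sum]
    _ = _ := by
      refine Finset.sum_congr rfl fun i _ => ?_
      rw [Finset.sum_eq_single i]
      · simp [h]
        ring
      · intro l _ hl
        simp [h, hl.symm]
      · simp

lemma tor_cartan (j : Fin 6) : P.tor (fun i => cartan j i) = P.basis (Fin.natAdd 72 j) := by
  have h : ∀ i l : Fin 6, ∑ j : Fin 6, (cartan i j : ℂ) * cartanInv j l = if i = l then 3 else 0 :=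
    fun i l => by exact_mod_cast sum_cartan_cartanInv i l
  simp only [tor, mul_div_assoc', ← Finset.sum_div, h]
  rw [Finset.sum_eq_single j]
  · simp
  · intro i _ hi
    simp [hi.symm]
  · simp

lemma tor_add (m n : Fin 6 → ℂ) : P.tor (m + n) = P.tor m + P.tor n := by
  simp [tor, add_mul, Finset.sum_add_distrib, add_smul]

lemma tor_smul (c : ℂ) (n : Fin 6 → ℂ) : P.tor (c • n) = c • P.tor n := by
  simp [tor, Finset.smul_sum, smul_smul, Finset.mul_sum, mul_assoc]

/-- The pinning obtained by applying an automorphism. -/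
noncomputable def map (g : L ≃ₗ⁅ℂ⁆ L) : Pinning L where
  rep := P.rep ∘ₗ (g.symm : L →ₗ[ℂ] L)
  map_lie x y := by
    change P.rep (g.symm ⁅x, y⁆) = _
    rw [LieEquiv.map_lie, P.map_lie]
    rfl
  injective := P.injective.comp g.symm.injective
  range_eq := by
    rw [LinearMap.range_comp_of_range_eq_top, P.range_eq]
    exact LinearMap.range_eq_top.mpr g.symm.surjective

@[simp] lemma map_basis (g : L ≃ₗ⁅ℂ⁆ L) (k : Fin 78) : (P.map g).basis k = g (P.basis k) := by
  apply (P.map g).injective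
  rw [rep_basis]
  change _ = P.rep (g.symm (g (P.basis k)))
  rw [LieEquiv.symm_apply_apply, rep_basis]

@[simp] lemma map_tor (g : L ≃ₗ⁅ℂ⁆ L) (n : Fin 6 → ℂ) : (P.map g).tor n = g (P.tor n) := by
  simp [tor]

end Pinning

end E6

section ExpOperator

open Filter Topology

variable {V : Type*} [NormedAddCommGroup V] [NormedSpace ℂ V] [CompleteSpace V]

lemma exp_neg_apply_exp_apply (D : V →L[ℂ] V) (x : V) :
    NormedSpace.exp (-D) (NormedSpace.exp D x) = x := by
  let _ : NormedAlgebra ℚ (V →L[ℂ] V) := NormedAlgebra.restrictScalars ℚ ℂ _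
  rw [← mul_apply_eq_comp,
    ← NormedSpace.exp_add_of_commute (Commute.refl D).neg_left]
  simp

lemma exp_apply_eq_of_hasDerivAt {D : V →L[ℂ] V} {γ : ℂ → V}
    (hγ : ∀ t, HasDerivAt γ (D (γ t)) t) : NormedSpace.exp D (γ 0) = γ 1 := by
  have hd : ∀ t : ℂ, HasDerivAt (fun t : ℂ => NormedSpace.exp (t • (-D)) (γ t)) 0 t := by
    intro t
    have h := (hasDerivAt_exp_smul_const (𝕂 := ℂ) (-D) t).clm_apply (hγ t)
    convert h using 1
    simp
  have hc := is_const_of_deriv_eq_zero (fun t => (hd t).differentiableAt)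
    (fun t => (hd t).deriv) 1 0
  simp only [one_smul, zero_smul, NormedSpace.exp_zero, one_apply_eq_self] at hc
  rw [← hc]
  simpa using exp_neg_apply_exp_apply (-D) (γ 1)

lemma hasDerivAt_exp_smul_apply (D : V →L[ℂ] V) (x : V) (t : ℂ) :
    HasDerivAt (fun t : ℂ => NormedSpace.exp (t • D) x) (D (NormedSpace.exp (t • D) x)) t := by
  have h := (hasDerivAt_exp_smul_const' (𝕂 := ℂ) D t).clm_apply (hasDerivAt_const t x)
  convert h using 1
  simp

lemma exp_apply_bilin {D : V →L[ℂ] V} {B : V →L[ℂ] V →L[ℂ] V}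
    (hD : ∀ x y, D (B x y) = B (D x) y + B x (D y)) (x y : V) :
    NormedSpace.exp D (B x y) = B (NormedSpace.exp D x) (NormedSpace.exp D y) := by
  have := exp_apply_eq_of_hasDerivAt (D := D)
    (γ := fun t => B (NormedSpace.exp (t • D) x) (NormedSpace.exp (t • D) y)) (fun t => by
      rw [hD]
      exact (B.hasFDerivAt.comp_hasDerivAt t (hasDerivAt_exp_smul_apply D x t)).clm_apply
        (hasDerivAt_exp_smul_apply D y t))
  simpa using this

lemma eventually_exists_exp_apply_mem [FiniteDimensional ℂ V] (T : V →L[ℂ] V →L[ℂ] V)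
    (C : Submodule ℂ V) {x : V} (hx : x ∈ C)
    (hC : LinearMap.range (T.flip x).toLinearMap ⊔ C = ⊤) :
    ∀ᶠ y in 𝓝 x, ∃ u : V, NormedSpace.exp (T u) y ∈ C := by
  let D : V × C →L[ℂ] V := (T.flip x).comp (ContinuousLinearMap.fst ℂ V C) +
    C.subtypeL.comp (ContinuousLinearMap.snd ℂ V C)
  let Φ : V × C → V := fun p => NormedSpace.exp (T p.1) (x + p.2)
  have hΦ : HasStrictFDerivAt Φ D 0 := by
    have h1 : HasStrictFDerivAt (fun p : V × C => NormedSpace.exp (T p.1))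
        ((1 : (V →L[ℂ] V) →L[ℂ] (V →L[ℂ] V)).comp
          (T.comp (ContinuousLinearMap.fst ℂ V C))) 0 := by
      refine HasStrictFDerivAt.comp (g := NormedSpace.exp) (f := fun p : V × C => T p.1) 0 ?_
        (T.comp (ContinuousLinearMap.fst ℂ V C)).hasStrictFDerivAt
      simpa using hasStrictFDerivAt_exp_zero (𝕂 := ℂ) (𝔸 := V →L[ℂ] V)
    have h2 : HasStrictFDerivAt (fun p : V × C => x + (p.2 : V))
        (C.subtypeL.comp (ContinuousLinearMap.snd ℂ V C)) 0 :=
      (C.subtypeL.comp (ContinuousLinearMap.snd ℂ V C)).hasStrictFDerivAt.const_add x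
    refine (h1.clm_apply h2).congr_fderiv ?_
    ext p <;> simp [D]
  have hD : LinearMap.range D.toLinearMap = ⊤ := by
    rw [eq_top_iff, ← hC]
    refine sup_le ?_ ?_
    · rintro _ ⟨y, rfl⟩
      exact ⟨(y, 0), by simp [D]⟩
    · intro y hy
      exact ⟨(0, ⟨y, hy⟩), by simp [D]⟩
  have h := hΦ.map_nhds_eq_of_surj hD
  have h0 : Φ 0 = x := by simp [Φ]
  have hr : Set.range Φ ∈ 𝓝 x := by
    rw [← h0, ← h]
    exact Filter.range_mem_map
  filter_upwards [hr]
  rintro _ ⟨p, rfl⟩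
  refine ⟨-p.1, ?_⟩
  rw [map_neg, exp_neg_apply_exp_apply]
  exact add_mem hx p.2.2

end ExpOperator

namespace LieAlgebra

open Filter Topology

attribute [local instance] LieRing.ofAssociativeRing

variable {L : Type*} [LieRing L] [LieAlgebra ℂ L]

lemma map_mem_engel_map (g : L ≃ₗ⁅ℂ⁆ L) (x y : L) :
    g y ∈ LieSubalgebra.engel ℂ (g x) ↔ y ∈ LieSubalgebra.engel ℂ x := by
  have h : ∀ n : ℕ, (ad ℂ L (g x) ^ n) (g y) = g ((ad ℂ L x ^ n) y) := by
    intro n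
    induction n with
    | zero => rfl
    | succ n ih => rw [pow_succ', pow_succ', Module.End.mul_apply, Module.End.mul_apply, ih,
        ad_apply, ad_apply, LieEquiv.map_lie]
  simp only [LieSubalgebra.mem_engel_iff, h, map_eq_zero_iff g g.injective]

lemma finrank_engel_map (g : L ≃ₗ⁅ℂ⁆ L) (x : L) :
    Module.finrank ℂ (LieSubalgebra.engel ℂ (g x)) =
      Module.finrank ℂ (LieSubalgebra.engel ℂ x) := by
  have h : (LieSubalgebra.engel ℂ (g x)).toSubmodule =
      (LieSubalgebra.engel ℂ x).toSubmodule.map (g.toLinearEquiv : L →ₗ[ℂ] L) := by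
    ext y
    obtain ⟨y, rfl⟩ := g.surjective y
    rw [Submodule.mem_map]
    constructor
    · exact fun hy => ⟨y, (map_mem_engel_map g x y).mp hy, rfl⟩
    · rintro ⟨z, hz, hzy⟩
      rw [← hzy]
      exact (map_mem_engel_map g x z).mpr hz
  have := LinearEquiv.finrank_map_eq g.toLinearEquiv (LieSubalgebra.engel ℂ x).toSubmodule
  rw [← h] at this
  exact this

variable [FiniteDimensional ℂ L]

variable (L) in
/-- Coordinates on a finite-dimensional complex Lie algebra. -/
noncomputable def coords : L ≃ₗ[ℂ] (Fin (Module.finrank ℂ L) → ℂ) :=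
  (Module.finBasis ℂ L).equivFun

variable (L) in
/-- The Lie bracket in coordinates. -/
noncomputable def coordsBracket : (Fin (Module.finrank ℂ L) → ℂ) →L[ℂ]
    (Fin (Module.finrank ℂ L) → ℂ) →L[ℂ] (Fin (Module.finrank ℂ L) → ℂ) :=
  LinearMap.toContinuousLinearMap
    ((LinearMap.toContinuousLinearMap : _ ≃ₗ[ℂ] _).toLinearMap ∘ₗ
      ((coords L).conj.toLinearMap ∘ₗ ((ad ℂ L : L →ₗ[ℂ] Module.End ℂ L) ∘ₗ
        (coords L).symm.toLinearMap)))

lemma coordsBracket_apply (x y : Fin (Module.finrank ℂ L) → ℂ) :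
    coordsBracket L x y = coords L ⁅(coords L).symm x, (coords L).symm y⁆ := rfl

lemma coordsBracket_leibniz (u x y : Fin (Module.finrank ℂ L) → ℂ) :
    coordsBracket L u (coordsBracket L x y) =
      coordsBracket L (coordsBracket L u x) y + coordsBracket L x (coordsBracket L u y) := by
  simp only [coordsBracket_apply, LinearEquiv.symm_apply_apply, ← map_add]
  rw [leibniz_lie]

/-- The automorphism `exp (ad u)`. -/
noncomputable def expAd (u : L) : L ≃ₗ⁅ℂ⁆ L where
  toFun x := (coords L).symm (NormedSpace.exp (coordsBracket L (coords L u)) (coords L x))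
  map_add' x y := by simp only [map_add]
  map_smul' c x := by simp only [map_smul, RingHom.id_apply]
  map_lie' := fun {x y} => by
    have := exp_apply_bilin (coordsBracket_leibniz (coords L u)) (coords L x) (coords L y)
    simp only [coordsBracket_apply (coords L x), LinearEquiv.symm_apply_apply] at this
    rw [this, coordsBracket_apply, LinearEquiv.symm_apply_apply]
  invFun x := (coords L).symm (NormedSpace.exp (-coordsBracket L (coords L u)) (coords L x))
  left_inv x := by simp only [LinearEquiv.apply_symm_apply, exp_neg_apply_exp_apply,
    LinearEquiv.symm_apply_apply]
  right_inv x := by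
    have := exp_neg_apply_exp_apply (-coordsBracket L (coords L u)) (coords L x)
    rw [neg_neg] at this
    simp only [LinearEquiv.apply_symm_apply, this, LinearEquiv.symm_apply_apply]

lemma expAd_apply (u x : L) : expAd u x =
    (coords L).symm (NormedSpace.exp (coordsBracket L (coords L u)) (coords L x)) := rfl

lemma expAd_of_lie_eq_smul {u x : L} {c : ℂ} (h : ⁅u, x⁆ = c • x) :
    expAd u x = Complex.exp c • x := by
  have := exp_apply_eq_of_hasDerivAt (D := coordsBracket L (coords L u))
    (γ := fun t => Complex.exp (t * c) • coords L x) fun t => by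
    refine ((((hasDerivAt_id t).mul_const c).cexp).smul_const (coords L x)).congr_deriv ?_
    simp [coordsBracket_apply, h, smul_smul]
  simp only [zero_mul, Complex.exp_zero, one_smul, one_mul] at this
  rw [expAd_apply, this, map_smul, LinearEquiv.symm_apply_apply]

lemma expAd_of_lie_lie_lie_eq_zero {u x y z : L} (hx : ⁅u, x⁆ = y) (hy : ⁅u, y⁆ = z)
    (hz : ⁅u, z⁆ = 0) : expAd u x = x + y + (1 / 2 : ℂ) • z := by
  have := exp_apply_eq_of_hasDerivAt (D := coordsBracket L (coords L u))
    (γ := fun t => coords L x + t • coords L y + (t ^ 2 / 2) • coords L z) fun t => by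
    refine ((((hasDerivAt_id t).smul_const (coords L y)).const_add (coords L x)).add
      ((((hasDerivAt_id t).pow 2).div_const 2).smul_const (coords L z))).congr_deriv ?_
    simp [coordsBracket_apply, hx, hy, hz]
  simp only [zero_smul, add_zero, ne_eq, OfNat.ofNat_ne_zero, not_false_eq_true, zero_pow, zero_div,
    one_smul, one_pow] at this
  rw [expAd_apply, this, map_add, map_add, map_smul]
  simp only [LinearEquiv.symm_apply_apply]

lemma expAd_of_lie_lie_eq_zero {u x y : L} (hx : ⁅u, x⁆ = y) (hy : ⁅u, y⁆ = 0) :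
    expAd u x = x + y := by
  simpa using expAd_of_lie_lie_lie_eq_zero hx hy (lie_zero u)

lemma expAd_of_lie_eq_zero {u x : L} (hx : ⁅u, x⁆ = 0) : expAd u x = x := by
  simpa using expAd_of_lie_lie_eq_zero hx (lie_zero u)

lemma range_ad_sup_engel (x : L) :
    LinearMap.range (ad ℂ L x) ⊔ (LieSubalgebra.engel ℂ x).toSubmodule = ⊤ := by
  have h := (ad ℂ L x).isCompl_iSup_ker_pow_iInf_range_pow
  rw [eq_top_iff, ← h.sup_eq_top, sup_comm]
  refine sup_le_sup ?_ ?_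
  · exact (iInf_le _ 1).trans (by simp)
  · refine iSup_le fun n y hy => ?_
    exact (LieSubalgebra.mem_engel_iff ℂ x y).mpr ⟨n, hy⟩

lemma eventually_exists_expAd_mem_engel (x d : L) (s₀ : ℂ) :
    ∀ᶠ s in 𝓝 s₀, ∃ u : L, expAd u (x + s • d) ∈ LieSubalgebra.engel ℂ (x + s₀ • d) := by
  set w := x + s₀ • d
  have h := eventually_exists_exp_apply_mem (coordsBracket L)
    ((LieSubalgebra.engel ℂ w).toSubmodule.map (coords L).toLinearMap)
    (Submodule.mem_map_of_mem (LieSubalgebra.self_mem_engel ℂ w)) (by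
      rw [eq_top_iff, ← (LinearEquiv.range (coords L)), LinearMap.range_eq_map,
        ← range_ad_sup_engel w, Submodule.map_sup]
      refine sup_le_sup_right ?_ _
      rintro _ ⟨_, ⟨y, rfl⟩, rfl⟩
      refine ⟨coords L (-y), ?_⟩
      simp only [ContinuousLinearMap.coe_coe, ContinuousLinearMap.flip_apply, coordsBracket_apply,
        LinearEquiv.symm_apply_apply, neg_lie, lie_skew, ad_apply, LinearEquiv.coe_coe])
  have hc : Tendsto (fun s : ℂ => coords L x + s • coords L d) (𝓝 s₀) (𝓝 (coords L w)) := by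
    have : Continuous fun s : ℂ => coords L x + s • coords L d := by fun_prop
    simpa [w] using this.tendsto s₀
  filter_upwards [hc.eventually h]
  rintro s ⟨u, y, hy, hu⟩
  refine ⟨(coords L).symm u, ?_⟩
  rw [expAd_apply, map_add, map_smul, LinearEquiv.apply_symm_apply, ← hu]
  simpa using hy

lemma isRegular_map {g : L ≃ₗ⁅ℂ⁆ L} {x : L} (hx : IsRegular ℂ x) : IsRegular ℂ (g x) := by
  rw [isRegular_iff_finrank_engel_eq_rank] at hx ⊢
  rw [finrank_engel_map, hx]

lemma finite_setOf_not_isRegular {x d : L} {s₀ : ℂ} (h : IsRegular ℂ (x + s₀ • d)) :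
    {s : ℂ | ¬ IsRegular ℂ (x + s • d)}.Finite := by
  let b := Module.finBasis ℂ L
  let p : Polynomial ℂ := MvPolynomial.aeval
    (fun i => Polynomial.C (b.repr x i) + Polynomial.X * Polynomial.C (b.repr d i))
    ((LinearMap.polyCharpoly (ad ℂ L).toLinearMap b).coeff (rank ℂ L))
  have hp : ∀ s, IsRegular ℂ (x + s • d) ↔ p.eval s ≠ 0 := by
    intro s
    rw [isRegular_iff_coeff_polyCharpoly_rank_ne_zero ℂ b]
    have h1 : p.eval s = MvPolynomial.eval (b.repr (x + s • d))
        ((LinearMap.polyCharpoly (ad ℂ L).toLinearMap b).coeff (rank ℂ L)) := by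
      have h2 : b.repr (x + s • d) = fun i => Polynomial.aeval s
          (Polynomial.C (b.repr x i) + Polynomial.X * Polynomial.C (b.repr d i)) := by
        funext i
        simp [mul_comm s]
      rw [← Polynomial.coe_aeval_eq_eval, ← AlgHom.comp_apply, MvPolynomial.comp_aeval, h2,
        ← MvPolynomial.coe_aeval_eq_eval]
      rfl
    rw [h1]
  have hp0 : p ≠ 0 := by
    rintro h0
    rw [hp, h0] at h
    simp at h
  refine (Polynomial.finite_setOfPred_isRoot hp0).subset fun s hs => ?_
  simpa [hp] using hs

lemma exists_isRegular_of_eventually {x d : L} {s₀ s₁ : ℂ} (h : IsRegular ℂ (x + s₀ • d))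
    {p : ℂ → Prop} (hp : ∀ᶠ s in 𝓝 s₁, p s) : ∃ s, p s ∧ IsRegular ℂ (x + s • d) := by
  have h1 : ∀ᶠ s in 𝓝[≠] s₁, IsRegular ℂ (x + s • d) := by
    have := (finite_setOf_not_isRegular h).isClosed.isOpen_compl
    have h2 := ((finite_setOf_not_isRegular h).subset
      (Set.sdiff_subset (t := {s₁}))).isClosed.isOpen_compl.mem_nhds (x := s₁) (by simp)
    filter_upwards [mem_nhdsWithin_of_mem_nhds h2, self_mem_nhdsWithin] with s hs1 hs2
    by_contra h3
    exact hs1 ⟨h3, hs2⟩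
  exact ((hp.filter_mono nhdsWithin_le_nhds).and h1).exists

lemma engel_eq_engel_of_mem {x y : L} (hx : IsRegular ℂ x) (hy : IsRegular ℂ y)
    (hxy : y ∈ LieSubalgebra.engel ℂ x) : LieSubalgebra.engel ℂ y = LieSubalgebra.engel ℂ x := by
  have key : LieSubalgebra.engel ℂ x ≤ LieSubalgebra.engel ℂ y := by
    set Ex : {LieSubalgebra.engel ℂ z | z ∈ LieSubalgebra.engel ℂ x} :=
      ⟨LieSubalgebra.engel ℂ x, x, LieSubalgebra.self_mem_engel _ _, rfl⟩
    suffices IsBot Ex from @this ⟨LieSubalgebra.engel ℂ y, y, hxy, rfl⟩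
    apply engel_isBot_of_isMin ((Cardinal.natCast_le_aleph0).trans
      (Cardinal.infinite_iff.mp inferInstance)) (LieSubalgebra.engel ℂ x) Ex le_rfl
    rintro ⟨_, y, hy, rfl⟩ hyx
    suffices Module.finrank ℂ (LieSubalgebra.engel ℂ x) ≤
        Module.finrank ℂ (LieSubalgebra.engel ℂ y) by
      suffices LieSubalgebra.engel ℂ y = LieSubalgebra.engel ℂ x from this.ge
      apply LieSubalgebra.toSubmodule_injective
      exact Submodule.eq_of_le_of_finrank_le hyx this
    rw [(isRegular_iff_finrank_engel_eq_rank ℂ x).mp hx]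
    apply rank_le_finrank_engel
  rw [isRegular_iff_finrank_engel_eq_rank] at hx hy
  refine (LieSubalgebra.toSubmodule_injective ?_).symm
  exact Submodule.eq_of_le_of_finrank_eq key (hx.trans hy.symm)

lemma isRegular_of_forall_lie_eq_zero {t : L} (ht : ∀ x ∈ LieSubalgebra.engel ℂ t,
    ∀ y ∈ LieSubalgebra.engel ℂ t, ⁅x, y⁆ = 0) : IsRegular ℂ t := by
  obtain ⟨r, hr⟩ := exists_isRegular ℂ L
  have h1 : IsRegular ℂ (t + (1 : ℂ) • (r - t)) := by simpa using hr
  obtain ⟨s, ⟨u, hu⟩, hs⟩ :=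
    exists_isRegular_of_eventually h1 (eventually_exists_expAd_mem_engel t (r - t) 0)
  rw [zero_smul, add_zero] at hu
  have hle : LieSubalgebra.engel ℂ t ≤ LieSubalgebra.engel ℂ (expAd u (t + s • (r - t))) :=
    fun z hz => (LieSubalgebra.mem_engel_iff _ _ _).mpr ⟨1, by simpa using ht _ hu z hz⟩
  have h2 := Submodule.finrank_mono (R := ℂ) (M := L)
    (s := (LieSubalgebra.engel ℂ t).toSubmodule)
    (t := (LieSubalgebra.engel ℂ (expAd u (t + s • (r - t)))).toSubmodule) hle
  have h3 := (isRegular_iff_finrank_engel_eq_rank ℂ _).mp (isRegular_map (g := expAd u) hs)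
  exact (isRegular_iff_finrank_engel_eq_rank ℂ t).mpr
    (le_antisymm (h2.trans h3.le) (rank_le_finrank_engel ℂ t))

/-- Every `ad`-semisimple element is conjugate to an element of a given abelian Engel subalgebra. -/
theorem exists_map_mem_engel {t h : L} (ht : ∀ x ∈ LieSubalgebra.engel ℂ t,
    ∀ y ∈ LieSubalgebra.engel ℂ t, ⁅x, y⁆ = 0) (hh : ∀ x ∈ LieSubalgebra.engel ℂ h, ⁅h, x⁆ = 0) :
    ∃ g : L ≃ₗ⁅ℂ⁆ L, g h ∈ LieSubalgebra.engel ℂ t := by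
  have htr : IsRegular ℂ (t + (0 : ℂ) • (h - t)) := by
    simpa using isRegular_of_forall_lie_eq_zero ht
  have hconn : IsPreconnected {s : ℂ | IsRegular ℂ (t + s • (h - t))} := by
    have := ((finite_setOf_not_isRegular htr).countable.isPathConnected_compl_of_one_lt_rank
      (by rw [Complex.rank_real_complex]; norm_num)).isConnected.isPreconnected
    simpa [Set.compl_ofPred] using this
  have hconj : ∀ s : ℂ, IsRegular ℂ (t + s • (h - t)) → ∃ g : L ≃ₗ⁅ℂ⁆ L,
      LieSubalgebra.engel ℂ (g (t + s • (h - t))) = LieSubalgebra.engel ℂ t := by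
    intro s hs
    let R : ℂ → ℂ → Prop := fun a b => ∃ g : L ≃ₗ⁅ℂ⁆ L,
      LieSubalgebra.engel ℂ (g (t + a • (h - t))) = LieSubalgebra.engel ℂ (t + b • (h - t))
    have hR : R s 0 := by
      refine IsPreconnected.induction₂' hconn R (fun a ha => ?_) ?_ hs htr
      · filter_upwards [mem_nhdsWithin_of_mem_nhds (eventually_exists_expAd_mem_engel t (h - t) a),
          self_mem_nhdsWithin] with b hb hbr
        obtain ⟨u, hu⟩ := hb
        have he := engel_eq_engel_of_mem ha (isRegular_map hbr) hu
        refine ⟨⟨(expAd u).symm, ?_⟩, ⟨expAd u, he⟩⟩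
        ext z
        rw [← map_mem_engel_map (expAd u), LieEquiv.apply_symm_apply, ← he, map_mem_engel_map]
      · rintro a b c _ _ _ ⟨g₁, h₁⟩ ⟨g₂, h₂⟩
        refine ⟨g₁.trans g₂, ?_⟩
        ext z
        rw [← h₂, LieEquiv.trans_apply, ← g₂.apply_symm_apply z, map_mem_engel_map,
          map_mem_engel_map, h₁]
    simpa [R] using hR
  obtain ⟨s, ⟨u, hu⟩, hs⟩ :=
    exists_isRegular_of_eventually htr (eventually_exists_expAd_mem_engel t (h - t) 1)
  rw [one_smul, add_sub_cancel] at hu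
  obtain ⟨g, hg⟩ := hconj s hs
  refine ⟨(expAd u).symm.trans g, ?_⟩
  rw [← hg, LieEquiv.trans_apply, map_mem_engel_map, ← map_mem_engel_map (expAd u),
    LieEquiv.apply_symm_apply]
  refine (LieSubalgebra.mem_engel_iff _ _ _).mpr ⟨1, ?_⟩
  rw [pow_one, ad_apply, ← lie_skew, hh _ hu, neg_zero]

end LieAlgebra

namespace IsSl2Triple

open LieModule

variable {L M : Type*} [LieRing L] [LieAlgebra ℂ L] [AddCommGroup M] [Module ℂ M]
  [LieRingModule L M] [LieModule ℂ L M] {h e f : L} {m : M} {μ : ℂ}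

lemma toEnd_e_apply_toEnd_h (t : IsSl2Triple h e f) (m : M) :
    ⁅e, ⁅h, m⁆⁆ = ⁅h, ⁅e, m⁆⁆ - (2 : ℂ) • ⁅e, m⁆ := by
  rw [leibniz_lie h e m, t.lie_h_e_smul ℂ, smul_lie]
  abel

lemma toEnd_f_apply_toEnd_h (t : IsSl2Triple h e f) (m : M) :
    ⁅f, ⁅h, m⁆⁆ = ⁅h, ⁅f, m⁆⁆ + (2 : ℂ) • ⁅f, m⁆ := by
  rw [leibniz_lie h f m, t.lie_lie_smul_f ℂ, neg_lie, smul_lie]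
  abel

lemma lie_h_lie_e (t : IsSl2Triple h e f) (hm : ⁅h, m⁆ = μ • m) :
    ⁅h, ⁅e, m⁆⁆ = (μ + 2) • ⁅e, m⁆ := by
  simpa using t.lie_h_pow_toEnd_e hm 1

lemma lie_h_lie_f (t : IsSl2Triple h e f) (hm : ⁅h, m⁆ = μ • m) :
    ⁅h, ⁅f, m⁆⁆ = (μ - 2) • ⁅f, m⁆ := by
  rw [leibniz_lie h f m, t.lie_lie_smul_f ℂ, neg_lie, smul_lie, hm, lie_smul]
  module

lemma pow_toEnd_f_lie_h (t : IsSl2Triple h e f) (n : ℕ) (m : M) :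
    (toEnd ℂ L M f ^ n) ⁅h, m⁆ =
      ⁅h, (toEnd ℂ L M f ^ n) m⁆ + (2 * n : ℂ) • (toEnd ℂ L M f ^ n) m := by
  induction n with
  | zero => simp
  | succ n ih =>
    rw [pow_succ', Module.End.mul_apply, ih, Module.End.mul_apply, toEnd_apply_apply, lie_add,
      t.toEnd_f_apply_toEnd_h, lie_smul, toEnd_apply_apply]
    push_cast
    module

lemma lie_e_pow_succ_toEnd_f_apply (t : IsSl2Triple h e f) (n : ℕ) (m : M) :
    ⁅e, (toEnd ℂ L M f ^ (n + 1)) m⁆ = (toEnd ℂ L M f ^ (n + 1)) ⁅e, m⁆ +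
      (n + 1 : ℂ) • (toEnd ℂ L M f ^ n) (⁅h, m⁆ - (n : ℂ) • m) := by
  induction n with
  | zero =>
    simp only [zero_add, pow_one, pow_zero, Module.End.one_apply, toEnd_apply_apply]
    rw [leibniz_lie e f m, t.lie_e_f]
    push_cast
    module
  | succ n ih =>
    have hp (k : ℕ) (x : M) : (toEnd ℂ L M f ^ (k + 1)) x = ⁅f, (toEnd ℂ L M f ^ k) x⁆ := by
      rw [pow_succ', Module.End.mul_apply, toEnd_apply_apply]
    rw [hp (n + 1) m, leibniz_lie e f, t.lie_e_f, ih, map_sub, map_sub, map_smul, map_smul,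
      t.pow_toEnd_f_lie_h, t.pow_toEnd_f_lie_h, hp (n + 1), lie_add, lie_smul, lie_sub, lie_smul,
      lie_add, lie_smul, t.toEnd_f_apply_toEnd_h, ← hp n m]
    push_cast
    module

lemma lie_f_pow_succ_toEnd_e_apply (t : IsSl2Triple h e f) (n : ℕ) (m : M) :
    ⁅f, (toEnd ℂ L M e ^ (n + 1)) m⁆ = (toEnd ℂ L M e ^ (n + 1)) ⁅f, m⁆ -
      (n + 1 : ℂ) • (toEnd ℂ L M e ^ n) (⁅h, m⁆ + (n : ℂ) • m) := by
  rw [t.symm.lie_e_pow_succ_toEnd_f_apply]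
  simp only [neg_lie, map_sub, map_neg, map_smul, map_add]
  module

section FiniteDimensional

variable [FiniteDimensional ℂ M]

lemma exists_nat_of_lie_e_eq_zero (t : IsSl2Triple h e f) (h0 : m ≠ 0) (hm : ⁅h, m⁆ = μ • m)
    (he : ⁅e, m⁆ = 0) : ∃ n : ℕ, μ = n :=
  HasPrimitiveVectorWith.exists_nat (t := t) ⟨h0, hm, he⟩

lemma exists_pow_toEnd_e_eq_zero (t : IsSl2Triple h e f) (hm : ⁅h, m⁆ = μ • m) :
    ∃ n, (toEnd ℂ L M e ^ n) m = 0 := by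
  by_contra! hne
  have hli := (toEnd ℂ L M h).eigenvectors_linearIndependent' (fun n : ℕ => μ + 2 * n)
    (fun a b hab => by simpa using hab) (fun n => (toEnd ℂ L M e ^ n) m)
    (fun n => Module.End.hasEigenvector_iff.mpr
      ⟨Module.End.mem_eigenspace_iff.mpr (t.lie_h_pow_toEnd_e hm n), hne n⟩)
  have := hli.finite
  exact not_finite ℕ

lemma exists_int_of_lie_h_eq_smul (t : IsSl2Triple h e f) (h0 : m ≠ 0) (hm : ⁅h, m⁆ = μ • m) :
    ∃ n : ℤ, μ = n := by
  obtain ⟨n, hn₁, hn₂⟩ :=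
    Nat.exists_not_and_succ_of_not_zero_of_exists h0 (t.exists_pow_toEnd_e_eq_zero hm)
  obtain ⟨k, hk⟩ := t.exists_nat_of_lie_e_eq_zero hn₁ (t.lie_h_pow_toEnd_e hm n)
    (by rw [lie_e_pow_toEnd_e, hn₂])
  exact ⟨k - 2 * n, by push_cast; linear_combination hk⟩

lemma lie_h_eq_smul_of_lie_e_eq_zero (t : IsSl2Triple h e f) (he : ⁅e, m⁆ = 0)
    (hm : ⁅h, ⁅h, m⁆ - μ • m⁆ = μ • (⁅h, m⁆ - μ • m)) : ⁅h, m⁆ = μ • m := by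
  by_contra hne
  have h0 : ⁅h, m⁆ - μ • m ≠ 0 := sub_ne_zero.mpr hne
  set w := ⁅h, m⁆ - μ • m with hw
  have hew : ⁅e, w⁆ = 0 := by simp [w, t.toEnd_e_apply_toEnd_h, he]
  have P : t.HasPrimitiveVectorWith w μ := ⟨h0, hm, hew⟩
  obtain ⟨k, hk⟩ := P.exists_nat
  have hm0 : m ≠ 0 := by
    rintro rfl
    simp at hne
  have hfw {n : ℕ} (hn : (toEnd ℂ L M f ^ n) m = 0) : (toEnd ℂ L M f ^ n) w = 0 := by
    rw [hw, map_sub, t.pow_toEnd_f_lie_h, map_smul, hn]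
    simp
  have hkey (n : ℕ) (hn : (toEnd ℂ L M f ^ (n + 1)) m = 0) :
      (μ - n) • (toEnd ℂ L M f ^ n) m + (toEnd ℂ L M f ^ n) w = 0 := by
    have h1 := t.lie_e_pow_succ_toEnd_f_apply n m
    rw [hn, he, map_zero, lie_zero, zero_add, eq_comm, smul_eq_zero] at h1
    rw [← h1.resolve_left (by exact_mod_cast n.succ_ne_zero), hw]
    simp only [map_sub, map_smul]
    module
  have hex : ∃ n, (toEnd ℂ L M f ^ n) m = 0 := by
    have h4 : ⁅h, (toEnd ℂ L M f ^ (k + 1)) m⁆ =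
        (μ - 2 * (k + 1)) • (toEnd ℂ L M f ^ (k + 1)) m := by
      have h5 := P.pow_toEnd_f_eq_zero_of_eq_nat hk
      rw [hw, map_sub, t.pow_toEnd_f_lie_h, map_smul] at h5
      push_cast at h5
      linear_combination (norm := module) (1 : ℂ) • h5
    obtain ⟨n, hn⟩ := t.symm.exists_pow_toEnd_e_eq_zero
      (m := (toEnd ℂ L M f ^ (k + 1)) m) (μ := -(μ - 2 * (k + 1))) (by rw [neg_lie, h4, neg_smul])
    exact ⟨n + (k + 1), by rwa [pow_add, Module.End.mul_apply]⟩
  obtain ⟨n, hn₁, hn₂⟩ := Nat.exists_not_and_succ_of_not_zero_of_exists hm0 hex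
  have hkn : k ≤ n := by
    by_contra! hlt
    exact P.pow_toEnd_f_ne_zero_of_eq_nat hk hlt (hfw hn₂)
  have h2 := hkey n hn₂
  rcases hkn.eq_or_lt with rfl | hlt
  · rw [hk, sub_self, zero_smul, zero_add] at h2
    exact P.pow_toEnd_f_ne_zero_of_eq_nat hk le_rfl h2
  · have h3 : (toEnd ℂ L M f ^ n) w = 0 := by
      rw [← Nat.sub_add_cancel (Nat.succ_le_of_lt hlt), pow_add, Module.End.mul_apply,
        P.pow_toEnd_f_eq_zero_of_eq_nat hk, map_zero]
    rw [h3, add_zero, smul_eq_zero, hk, sub_eq_zero] at h2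
    exact hn₁ (h2.resolve_left (by exact_mod_cast hlt.ne))

lemma exists_lie_e_eq (t : IsSl2Triple h e f) (hμ : ∀ n : ℕ, μ ≠ -n) (hm : ⁅h, m⁆ = μ • m) :
    ∃ x : M, ⁅h, x⁆ = (μ - 2) • x ∧ ⁅e, x⁆ = m := by
  let V : Submodule ℂ M := (toEnd ℂ L M h).eigenspace μ
  have hV (x : M) : x ∈ V ↔ ⁅h, x⁆ = μ • x := by
    rw [Module.End.mem_eigenspace_iff, toEnd_apply_apply]
  let T : M →ₗ[ℂ] M := toEnd ℂ L M e ∘ₗ toEnd ℂ L M f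
  have hT (x : M) (hx : x ∈ V) : T x ∈ V := by
    rw [hV] at hx ⊢
    have := t.lie_h_lie_e (t.lie_h_lie_f hx)
    rwa [sub_add_cancel] at this
  have hinj : Function.Injective (T.restrict hT) := by
    rw [← LinearMap.ker_eq_bot, LinearMap.ker_eq_bot']
    rintro ⟨y, hy⟩ hTy
    have hTy' : ⁅e, ⁅f, y⁆⁆ = 0 := congrArg Subtype.val hTy
    rw [Submodule.mk_eq_zero]
    by_contra hy0
    obtain ⟨n, hn₁, hn₂⟩ := Nat.exists_not_and_succ_of_not_zero_of_exists hy0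
      (t.exists_pow_toEnd_e_eq_zero ((hV y).mp hy))
    have h1 := t.lie_f_pow_succ_toEnd_e_apply n y
    rw [hn₂, lie_zero, pow_succ, Module.End.mul_apply, toEnd_apply_apply, hTy', map_zero, zero_sub,
      eq_comm, neg_eq_zero, smul_eq_zero, (hV y).mp hy, ← add_smul, map_smul, smul_eq_zero] at h1
    rcases h1 with h1 | h1 | h1
    · exact n.cast_add_one_ne_zero h1
    · exact hμ n (eq_neg_of_add_eq_zero_left h1)
    · exact hn₁ h1
  obtain ⟨⟨y, hy⟩, hy'⟩ := LinearMap.surjective_of_injective hinj ⟨m, (hV m).mpr hm⟩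
  exact ⟨⁅f, y⁆, t.lie_h_lie_f ((hV y).mp hy), congrArg Subtype.val hy'⟩

lemma lie_h_eq_zero (t : IsSl2Triple h e f) (he : IsNilpotent (toEnd ℂ L M e))
    (hm : ⁅h, ⁅h, m⁆⁆ = 0) : ⁅h, m⁆ = 0 := by
  have key (n : ℕ) : ∀ (k : ℕ) (m : M), (toEnd ℂ L M e ^ n) m = 0 →
      ⁅h, ⁅h, m⁆ - (k : ℂ) • m⁆ = (k : ℂ) • (⁅h, m⁆ - (k : ℂ) • m) → ⁅h, m⁆ = (k : ℂ) • m := by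
    induction n with
    | zero =>
      intro k m hm _
      rw [pow_zero, Module.End.one_apply] at hm
      simp [hm]
    | succ n ih =>
      intro k m hm hk
      have h1 : ⁅h, ⁅e, m⁆⁆ = ((k : ℂ) + 2) • ⁅e, m⁆ := by
        have := ih (k + 2) ⁅e, m⁆ (by rwa [pow_succ, Module.End.mul_apply] at hm) ?_
        · simpa using this
        · have := congrArg (fun x => ⁅e, x⁆) hk
          simp only [lie_sub, lie_smul, t.toEnd_e_apply_toEnd_h] at this ⊢
          push_cast
          linear_combination (norm := module) (1 : ℂ) • this
      obtain ⟨x, hx, hxe⟩ := t.exists_lie_e_eq (fun n hn => by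
        have : k + 2 + n = 0 := by exact_mod_cast (by linear_combination hn : (k + 2 + n : ℂ) = 0)
        omega) h1
      rw [add_sub_cancel_right] at hx
      have h2 := t.lie_h_eq_smul_of_lie_e_eq_zero (m := m - x) (μ := k)
        (by rw [lie_sub, hxe, sub_self]) (by
          simp only [lie_sub, lie_smul, hx] at hk ⊢
          linear_combination (norm := module) (1 : ℂ) • hk)
      rw [lie_sub, hx, smul_sub] at h2
      exact sub_left_injective h2
  obtain ⟨n, hn⟩ := he
  simpa using key n 0 m (by rw [hn, LinearMap.zero_apply]) (by simpa using hm)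

end FiniteDimensional

end IsSl2Triple

namespace E6

open LieAlgebra

/-- The index of a simple root vector. -/
def pos (i : Fin 6) : Fin 78 := ⟨i, by omega⟩

/-- The index of the root vector of the negative of a simple root. -/
def neg (i : Fin 6) : Fin 78 := ⟨36 + i, by omega⟩

/-- The index of a simple coroot. -/
def coroot (i : Fin 6) : Fin 78 := Fin.natAdd 72 i

section weights

variable {R : Type*} [CommRing R]

lemma root_pos (i j : Fin 6) : root (pos i) j = if i = j then 1 else 0 := by
  revert i j
  decide +kernel

lemma root_neg (i j : Fin 6) : root (neg i) j = if i = j then -1 else 0 := by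
  revert i j
  decide +kernel

lemma root_coroot (i j : Fin 6) : root (coroot i) j = 0 := by
  revert i j
  decide +kernel

@[simp] lemma wt_pos (n : Fin 6 → R) (i : Fin 6) : wt n (pos i) = n i := by
  simp [wt, root_pos]

@[simp] lemma wt_neg (n : Fin 6 → R) (i : Fin 6) : wt n (neg i) = -n i := by
  simp [wt, root_neg, Finset.sum_ite_eq]

@[simp] lemma wt_coroot (n : Fin 6 → R) (i : Fin 6) : wt n (coroot i) = 0 := by
  simp [wt, root_coroot]

lemma wt_intCast (n : Fin 6 → ℤ) (k : Fin 78) : wt (fun i => (n i : ℂ)) k = (wt n k : ℤ) := by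
  simp [wt]

lemma wt_add (m n : Fin 6 → R) (k : Fin 78) : wt (m + n) k = wt m k + wt n k := by
  simp [wt, add_mul, Finset.sum_add_distrib]

lemma wt_smul (c : R) (n : Fin 6 → R) (k : Fin 78) : wt (c • n) k = c * wt n k := by
  simp [wt, Finset.mul_sum, mul_assoc]

lemma wt_two_ne_zero {k : Fin 78} (hk : k < 72) : wt (fun _ => (2 : ℤ)) k ≠ 0 := by
  have : ∀ k : Fin 78, k < 72 → wt (fun _ => (2 : ℤ)) k ≠ 0 := by decide +kernel
  exact this k hk

lemma exists_coroot {k : Fin 78} (hk : ¬ k < 72) : ∃ i, k = coroot i :=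
  ⟨⟨k - 72, by omega⟩, Fin.ext (by
    have : 72 ≤ (k : ℕ) := not_lt.mp hk
    simp only [coroot, Fin.natAdd_mk]
    omega)⟩

end weights

namespace Pinning

variable {L : Type*} [LieRing L] [LieAlgebra ℂ L] (P : Pinning L)

lemma lie_pos_neg (i : Fin 6) : ⁅P.basis (pos i), P.basis (neg i)⁆ = P.basis (coroot i) := by
  rw [P.lie_basis (n := [(coroot i, 1)]), vec_singleton]
  revert i
  decide +kernel

lemma repr_lie_tor (n : Fin 6 → ℂ) (x : L) (k : Fin 78) :
    P.basis.repr ⁅P.tor n, x⁆ k = wt n k * P.basis.repr x k := by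
  conv_lhs => rw [← P.basis.sum_repr x, lie_sum, map_sum, Finsupp.finsetSum_apply]
  simp only [lie_smul, lie_tor, map_smul, Finsupp.smul_apply, Module.Basis.repr_self, smul_eq_mul]
  rw [Finset.sum_eq_single k]
  · simp [mul_comm]
  · intro l _ hl
    simp [hl]
  · simp

lemma lie_tor_eq_smul_iff (n : Fin 6 → ℂ) (c : ℂ) (x : L) :
    ⁅P.tor n, x⁆ = c • x ↔ ∀ k, P.basis.repr x k ≠ 0 → wt n k = c := by
  rw [P.basis.ext_elem_iff]
  refine forall_congr' fun k => ?_
  rw [repr_lie_tor, map_smul, Finsupp.smul_apply, smul_eq_mul, mul_eq_mul_right_iff, or_comm,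
    or_iff_not_imp_left]

lemma tor_zero : P.tor 0 = 0 := by
  simpa using P.tor_smul 0 0

lemma tor_injective : Function.Injective P.tor := by
  intro m n h
  funext i
  have h1 := P.lie_tor m (pos i)
  rw [h, lie_tor, wt_pos, wt_pos] at h1
  exact (smul_left_injective ℂ (P.basis.ne_zero _) h1).symm

lemma exists_eq_tor {x : L} (hx : ∀ k : Fin 78, k < 72 → P.basis.repr x k = 0) :
    ∃ n, x = P.tor n := by
  rw [← P.basis.sum_repr x]
  refine Finset.sum_induction _ (fun y => ∃ n, y = P.tor n) ?_ ⟨0, P.tor_zero.symm⟩ ?_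
  · rintro _ _ ⟨m, rfl⟩ ⟨n, rfl⟩
    exact ⟨m + n, (P.tor_add m n).symm⟩
  · intro k _
    by_cases hk : k < 72
    · exact ⟨0, by rw [hx k hk, zero_smul, tor_zero]⟩
    · obtain ⟨i, rfl⟩ := exists_coroot hk
      exact ⟨_, by rw [coroot, ← tor_cartan, ← tor_smul]⟩

lemma repr_tor {n : Fin 6 → ℂ} {k : Fin 78} (hk : k < 72) : P.basis.repr (P.tor n) k = 0 := by
  simp only [tor, map_sum, map_smul, Finsupp.finsetSum_apply, Finsupp.smul_apply,
    Module.Basis.repr_self]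
  refine Finset.sum_eq_zero fun j _ => ?_
  rw [Finsupp.single_eq_of_ne, smul_zero]
  rintro rfl
  have : 72 + (j : ℕ) < 72 := hk
  omega

@[simp] lemma lie_tor_tor (m n : Fin 6 → ℂ) : ⁅P.tor m, P.tor n⁆ = 0 := by
  rw [← zero_smul ℂ (P.tor n), lie_tor_eq_smul_iff]
  intro k hk
  by_cases h : k < 72
  · exact absurd (P.repr_tor h) hk
  · obtain ⟨i, rfl⟩ := exists_coroot h
    exact wt_coroot m i

variable {e h f : L}

/-- A neutral element of an `sl₂`-triple lies in the Cartan subalgebra of some pinning. -/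
lemma exists_tor_eq [FiniteDimensional ℂ L] (P : Pinning L) (t : IsSl2Triple h e f)
    (he : IsNilpotent (ad ℂ L e)) :
    ∃ (P : Pinning L) (n : Fin 6 → ℤ), h = P.tor (fun i => n i) := by
  have hmem : ∀ x ∈ LieSubalgebra.engel ℂ (P.tor fun _ => 2), ∃ n, x = P.tor n := by
    intro x hx
    obtain ⟨r, hr⟩ := (LieSubalgebra.mem_engel_iff ℂ _ _).mp hx
    refine P.exists_eq_tor fun k hk => ?_
    have h1 (r : ℕ) : P.basis.repr ((ad ℂ L (P.tor fun _ => 2) ^ r) x) k =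
        (wt (fun _ => (2 : ℂ)) k) ^ r * P.basis.repr x k := by
      induction r with
      | zero => simp
      | succ r ih => rw [pow_succ', Module.End.mul_apply, ad_apply, repr_lie_tor, ih]; ring
    have h2 := h1 r
    rw [hr, map_zero, Finsupp.zero_apply, eq_comm, mul_eq_zero] at h2
    refine h2.resolve_left (pow_ne_zero _ ?_)
    have h3 := wt_intCast (fun _ => 2) k
    simp only [Int.cast_ofNat] at h3
    rw [h3]
    exact_mod_cast wt_two_ne_zero hk
  obtain ⟨g, hg⟩ := exists_map_mem_engel (t := P.tor fun _ => 2) (h := h)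
    (fun x hx y hy => by
      obtain ⟨m, rfl⟩ := hmem x hx
      obtain ⟨n, rfl⟩ := hmem y hy
      exact P.lie_tor_tor m n)
    (fun x hx => by
      obtain ⟨r, hr⟩ := (LieSubalgebra.mem_engel_iff ℂ _ _).mp hx
      have key (r : ℕ) : (ad ℂ L h ^ (r + 1)) x = 0 → ⁅h, x⁆ = 0 := by
        induction r with
        | zero => simp
        | succ r ih =>
          refine fun hr => ih ?_
          rw [pow_succ', pow_succ', Module.End.mul_apply, Module.End.mul_apply] at hr
          rw [pow_succ', Module.End.mul_apply]
          exact t.lie_h_eq_zero he hr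
      exact key r (by rw [pow_succ', Module.End.mul_apply, hr, map_zero]))
  obtain ⟨n, hn⟩ := hmem _ hg
  have hn' : h = (P.map g.symm).tor n := by
    rw [map_tor, ← hn, LieEquiv.symm_apply_apply]
  have hint (i : Fin 6) : ∃ z : ℤ, n i = z := by
    refine t.exists_int_of_lie_h_eq_smul ((P.map g.symm).basis.ne_zero (pos i)) ?_
    rw [hn', lie_tor, wt_pos]
  choose z hz using hint
  exact ⟨P.map g.symm, z, by rw [hn']; congr; funext i; exact hz i⟩

/-- The heights of the fundamental coweights, doubled. -/
def twoRho : Fin 6 → ℤ := ![16, 22, 30, 42, 30, 16]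

lemma sum_twoRho_mul_cartan (i : Fin 6) : ∑ j, twoRho j * cartan i j = 2 := by
  revert i
  decide +kernel

/-- The reflection in a simple root, applied to an element of the Cartan subalgebra. -/
lemma exists_reflection [FiniteDimensional ℂ L] (n : Fin 6 → ℂ) (i : Fin 6) :
    ∃ g : L ≃ₗ⁅ℂ⁆ L, g (P.tor n) = P.tor (n - n i • fun j : Fin 6 => (cartan i j : ℂ)) := by
  set E := P.basis (pos i)
  set F := P.basis (neg i)
  set H := P.basis (coroot i)
  have hH : P.tor (fun j => (cartan i j : ℂ)) = H := P.tor_cartan i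
  have hii : (cartan i i : ℂ) = 2 := by
    have : ∀ i : Fin 6, cartan i i = 2 := by decide +kernel
    exact_mod_cast this i
  have hEF : ⁅E, F⁆ = H := P.lie_pos_neg i
  have hFE : ⁅-F, E⁆ = H := by rw [neg_lie, lie_skew, hEF]
  have hHE : ⁅H, E⁆ = (2 : ℂ) • E := by rw [← hH, lie_tor, wt_pos, hii]
  have hHF : ⁅H, F⁆ = (-2 : ℂ) • F := by rw [← hH, lie_tor, wt_neg, hii]
  have hEH : ⁅E, H⁆ = (-2 : ℂ) • E := by rw [← lie_skew, hHE, neg_smul]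
  have hFH : ⁅-F, H⁆ = (-2 : ℂ) • F := by rw [neg_lie, lie_skew, hHF]
  have htE : ⁅E, P.tor n⁆ = (-n i) • E := by rw [← lie_skew, lie_tor, wt_pos, neg_smul]
  have htF : ⁅-F, P.tor n⁆ = (-n i) • F := by rw [neg_lie, lie_skew, lie_tor, wt_neg]
  refine ⟨(expAd E).trans ((expAd (-F)).trans (expAd E)), ?_⟩
  have e1 : expAd E (P.tor n) = P.tor n + (-n i) • E :=
    expAd_of_lie_lie_eq_zero htE (by simp)
  have e2 : expAd E E = E := expAd_of_lie_eq_zero (lie_self E)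
  have e3 : expAd E H = H + (-2 : ℂ) • E := expAd_of_lie_lie_eq_zero hEH (by simp)
  have e4 : expAd (-F) (P.tor n) = P.tor n + (-n i) • F :=
    expAd_of_lie_lie_eq_zero htF (by simp)
  have e5 : expAd (-F) E = E + H + (1 / 2 : ℂ) • ((-2 : ℂ) • F) :=
    expAd_of_lie_lie_lie_eq_zero hFE hFH (by simp)
  have e6 : expAd E F = F + H + (1 / 2 : ℂ) • ((-2 : ℂ) • E) :=
    expAd_of_lie_lie_lie_eq_zero hEF hEH (by simp)
  rw [LieEquiv.trans_apply, LieEquiv.trans_apply, e1, map_add, map_smul, e4, e5]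
  simp only [map_add, map_smul, e1, e2, e3, e6]
  rw [sub_eq_add_neg, ← neg_smul, tor_add, tor_smul, hH]
  module

lemma exists_tor_eq_of_nonneg [FiniteDimensional ℂ L] (P : Pinning L) (t : IsSl2Triple h e f)
    (he : IsNilpotent (ad ℂ L e)) :
    ∃ (P : Pinning L) (n : Fin 6 → ℤ), h = P.tor (fun i => n i) ∧ ∀ i, 0 ≤ n i := by
  let S : ℤ → Prop := fun z =>
    ∃ (P : Pinning L) (n : Fin 6 → ℤ), h = P.tor (fun i => n i) ∧ z = ∑ i, twoRho i * n i
  have hfin : {z : ℤ | (ad ℂ L h).HasEigenvalue z}.Finite :=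
    (Module.End.finite_hasEigenvalue (ad ℂ L h)).preimage Int.cast_injective.injOn
  obtain ⟨B, hB⟩ := hfin.bddAbove
  have hbound : ∀ z, S z → z ≤ ∑ i, twoRho i * B := by
    rintro _ ⟨P, n, hn, rfl⟩
    refine Finset.sum_le_sum fun i _ => mul_le_mul_of_nonneg_left (hB ?_) ?_
    · refine Module.End.hasEigenvalue_of_hasEigenvector (x := P.basis (pos i))
        ⟨Module.End.mem_eigenspace_iff.mpr ?_, P.basis.ne_zero _⟩
      rw [ad_apply, hn, lie_tor, wt_pos]
    · revert i
      decide
  obtain ⟨P, n, hn⟩ := P.exists_tor_eq t he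
  obtain ⟨z, ⟨P, n, hn, hz⟩, hmax⟩ := Int.exists_greatest_of_bdd ⟨_, hbound⟩ ⟨_, P, n, hn, rfl⟩
  refine ⟨P, n, hn, fun i => ?_⟩
  obtain ⟨g, hg⟩ := P.exists_reflection (fun i => n i) i
  have h1 : ∑ j, twoRho j * (n j - n i * cartan i j) ≤ z :=
    hmax _ ⟨P.map g.symm, fun j => n j - n i * cartan i j, by
    rw [map_tor, LieEquiv.eq_symm_apply, hn, hg]
    congr
    funext j
    simp, rfl⟩
  have h2 : ∑ j, twoRho j * (n j - n i * cartan i j) = z - n i * 2 := by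
    rw [hz, ← sum_twoRho_mul_cartan i, Finset.mul_sum, ← Finset.sum_sub_distrib]
    exact Finset.sum_congr rfl fun j _ => by ring
  omega

end Pinning

end E6

namespace E6

open LieAlgebra

namespace Pinning

variable {L : Type*} [LieRing L] [LieAlgebra ℂ L] (P : Pinning L) {e h f : L}

lemma iSup_eigenspace_tor (n : Fin 6 → ℂ) : ⨆ μ, (ad ℂ L (P.tor n)).genEigenspace μ 1 = ⊤ := by
  rw [eq_top_iff, ← P.basis.span_eq, Submodule.span_le]
  rintro _ ⟨k, rfl⟩
  refine Submodule.mem_iSup_of_mem (wt n k) ?_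
  rw [Module.End.mem_eigenspace_iff, ad_apply, lie_tor]

lemma isSemisimple_ad_tor [FiniteDimensional ℂ L] (n : Fin 6 → ℂ) :
    (ad ℂ L (P.tor n)).IsSemisimple := by
  let s : Finset ℂ := Finset.univ.image (wt n)
  refine Module.End.isSemisimple_of_squarefree_aeval_eq_zero
    (p := ∏ c ∈ s, (Polynomial.X - Polynomial.C c))
    ((Polynomial.separable_prod_X_sub_C_iff' (f := fun c : ℂ => c)).mpr
      fun x _ y _ hxy => hxy).squarefree ?_
  refine P.basis.ext fun k => ?_
  have hk : wt n k ∈ s := Finset.mem_image_of_mem _ (Finset.mem_univ k)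
  rw [← Finset.prod_erase_mul _ _ hk, map_mul, Module.End.mul_apply]
  simp [lie_tor, Module.algebraMap_end_apply]

/-- The support of a distinguished element spans the dual of the Cartan subalgebra. -/
lemma eq_zero_of_isDistinguished [FiniteDimensional ℂ L] (hd : IsDistinguished L e)
    {m : Fin 6 → ℂ} (hm : ∀ k, P.basis.repr e k ≠ 0 → wt m k = 0) : m = 0 := by
  have h1 : ⁅P.tor m, e⁆ = 0 := by
    rw [← zero_smul ℂ e, lie_tor_eq_smul_iff]
    exact hm
  exact P.tor_injective ((hd _ h1 (P.isSemisimple_ad_tor m)).trans P.tor_zero.symm)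

variable {n : Fin 6 → ℤ}

lemma wt_eq_of_repr_ne_zero {z : ℤ} {x : L} (hx : ⁅P.tor (fun i => n i), x⁆ = (z : ℂ) • x)
    {k : Fin 78} (hk : P.basis.repr x k ≠ 0) : wt n k = z := by
  have := (P.lie_tor_eq_smul_iff _ _ _).mp hx k hk
  rw [wt_intCast] at this
  exact_mod_cast this

lemma root_nonneg_or (k : Fin 78) : (∀ i : Fin 6, 0 ≤ root k i) ∨ ∀ i : Fin 6, root k i ≤ 0 := by
  revert k
  decide +kernel

lemma le_two_of_isDistinguished [FiniteDimensional ℂ L] (hd : IsDistinguished L e)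
    (he : ⁅P.tor (fun i => n i), e⁆ = (2 : ℂ) • e) (hn : ∀ i, 0 ≤ n i) (i : Fin 6) : n i ≤ 2 := by
  by_contra! hi
  have h1 := P.eq_zero_of_isDistinguished hd (m := Pi.single i 1) fun k hk => by
    have h2 := P.wt_eq_of_repr_ne_zero (z := 2) (by simpa using he) hk
    rcases root_nonneg_or k with h3 | h3
    · have h4 : n i * root k i ≤ wt n k :=
        Finset.single_le_sum (f := fun j : Fin 6 => n j * root k j)
          (fun j _ => mul_nonneg (hn j) (h3 j)) (Finset.mem_univ i)
      have h5 : root k i = 0 := by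
        have := h3 i
        nlinarith
      simp [wt, Pi.single_apply, h5]
    · have h4 : wt n k ≤ 0 := Finset.sum_nonpos fun j _ =>
        mul_nonpos_of_nonneg_of_nonpos (hn j) (h3 j)
      omega
  simpa using congrFun h1 i

lemma six_le_card_of_isDistinguished [FiniteDimensional ℂ L] (hd : IsDistinguished L e)
    (he : ⁅P.tor (fun i => n i), e⁆ = (2 : ℂ) • e) :
    6 ≤ (Finset.univ.filter fun k => wt n k = 2).card := by
  let T : (Fin 6 → ℂ) →ₗ[ℂ] ({k // wt n k = 2} → ℂ) :=
    { toFun := fun m k => wt m k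
      map_add' := fun m m' => funext fun k => wt_add m m' k
      map_smul' := fun c m => funext fun k => wt_smul c m k }
  have hT : Function.Injective T := by
    rw [← LinearMap.ker_eq_bot, LinearMap.ker_eq_bot']
    intro m hm
    exact P.eq_zero_of_isDistinguished hd fun k hk =>
      congrFun hm ⟨k, P.wt_eq_of_repr_ne_zero (z := 2) (by simpa using he) hk⟩
  simpa [Fintype.card_subtype] using LinearMap.finrank_le_finrank_of_injective hT

lemma finrank_span_basis (p : Fin 78 → Prop) [DecidablePred p] :
    Module.finrank ℂ (Submodule.span ℂ (P.basis '' {k | p k})) =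
      (Finset.univ.filter p).card := by
  have h : LinearIndependent ℂ fun k : {k // p k} => P.basis k :=
    P.basis.linearIndependent.comp _ Subtype.val_injective
  rw [Set.image_eq_range]
  exact (finrank_span_eq_card h).trans (by simp [Fintype.card_subtype])

lemma mem_span_basis {p : Fin 78 → Prop} {x : L} :
    x ∈ Submodule.span ℂ (P.basis '' {k | p k}) ↔ ∀ k, P.basis.repr x k ≠ 0 → p k := by
  rw [P.basis.mem_span_image]
  simp [Set.subset_def]

lemma lie_mem_of_weight [FiniteDimensional ℂ L] {x : L} (t : IsSl2Triple (P.tor fun i => n i) e f)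
    (hx : ⁅x, e⁆ = 0) : ∀ k, P.basis.repr x k ≠ 0 → 0 ≤ wt n k := by
  rw [← P.mem_span_basis]
  let K := LinearMap.ker (ad ℂ L e)
  have hK (y : L) : y ∈ K ↔ ⁅e, y⁆ = 0 := LinearMap.mem_ker
  have hinv : ∀ y ∈ K, ad ℂ L (P.tor fun i => n i) y ∈ K := fun y hy => by
    rw [hK] at hy ⊢
    rw [ad_apply, t.toEnd_e_apply_toEnd_h, hy, lie_zero, smul_zero, sub_zero]
  have hx' : x ∈ K := by rw [hK, ← lie_skew, hx, neg_zero]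
  rw [Submodule.eq_iSup_inf_genEigenspace 1 hinv (P.iSup_eigenspace_tor _)] at hx'
  refine (iSup_le (a := Submodule.span ℂ (P.basis '' {k | 0 ≤ wt n k})) fun μ => ?_) hx'
  rintro y ⟨hy1, hy2⟩
  rw [SetLike.mem_coe, hK] at hy1
  rw [SetLike.mem_coe, Module.End.mem_eigenspace_iff, ad_apply] at hy2
  rw [P.mem_span_basis]
  intro k hk
  obtain ⟨r, hr⟩ := t.exists_nat_of_lie_e_eq_zero (m := y) (by rintro rfl; simp at hk) hy2 hy1
  rw [P.wt_eq_of_repr_ne_zero (z := r) (by simpa [hr] using hy2) hk]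
  exact r.cast_nonneg

lemma card_filter_eq_finrank [FiniteDimensional ℂ L] (t : IsSl2Triple (P.tor fun i => n i) e f) :
    (Finset.univ.filter fun k => wt n k = 0 ∨ wt n k = 1).card =
      Module.finrank ℂ (centralizer L e) := by
  let U := Submodule.span ℂ (P.basis '' {k | 0 ≤ wt n k})
  let T : U →ₗ[ℂ] L := (ad ℂ L e).domRestrict U
  have hrange : LinearMap.range T = Submodule.span ℂ (P.basis '' {k | 2 ≤ wt n k}) := by
    apply le_antisymm
    · rw [LinearMap.range_domRestrict, Submodule.map_span_le]
      rintro _ ⟨k, hk, rfl⟩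
      rw [P.mem_span_basis]
      intro l hl
      have h1 := t.lie_h_lie_e (P.lie_tor _ k)
      rw [wt_intCast] at h1
      rw [P.wt_eq_of_repr_ne_zero (z := wt n k + 2) (by simpa using h1) hl]
      exact Int.le_add_of_nonneg_left hk
    · rw [Submodule.span_le]
      rintro _ ⟨k, hk, rfl⟩
      obtain ⟨x, hx, hxe⟩ := t.exists_lie_e_eq (μ := (wt n k : ℤ)) (fun r hr => by
        have h1 : wt n k = -r := by exact_mod_cast hr
        have h2 : 2 ≤ wt n k := hk
        omega) (by rw [lie_tor, wt_intCast])
      refine ⟨⟨x, P.mem_span_basis.mpr fun l hl => ?_⟩, hxe⟩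
      rw [P.wt_eq_of_repr_ne_zero (z := wt n k - 2) (by simpa using hx) hl]
      exact sub_nonneg.mpr hk
  have hker : Module.finrank ℂ (LinearMap.ker T) = Module.finrank ℂ (centralizer L e) := by
    have h1 : LinearMap.ker T = (centralizer L e).toSubmodule.comap U.subtype := by
      ext x
      change ⁅e, (x : L)⁆ = 0 ↔ ⁅(x : L), e⁆ = 0
      rw [← lie_skew, neg_eq_zero]
    rw [h1]
    exact (Submodule.comapSubtypeEquivOfLe fun x hx =>
      P.mem_span_basis.mpr (P.lie_mem_of_weight t hx)).finrank_eq
  have h1 := LinearMap.finrank_range_add_finrank_ker T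
  rw [hrange, hker, P.finrank_span_basis, P.finrank_span_basis] at h1
  have h2 : (Finset.univ.filter fun k => wt n k = 0 ∨ wt n k = 1) =
      (Finset.univ.filter fun k => 0 ≤ wt n k) \ (Finset.univ.filter fun k => 2 ≤ wt n k) := by
    ext k
    simp only [Finset.mem_filter, Finset.mem_univ, true_and, Finset.mem_sdiff]
    omega
  rw [h2, Finset.card_sdiff_of_subset]
  · omega
  · intro k
    simp only [Finset.mem_filter, Finset.mem_univ, true_and]
    omega

end Pinning

set_option maxRecDepth 100000 in
lemma card_filter_lt_six_of_card_eq_eight : ∀ a b c d e f : Fin 2,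
    (Finset.univ.filter fun k : Fin 78 => wt (R := ℤ)
      ![a.val + 1, b.val + 1, c.val + 1, d.val + 1, e.val + 1, f.val + 1] k = 0 ∨ wt (R := ℤ)
      ![a.val + 1, b.val + 1, c.val + 1, d.val + 1, e.val + 1, f.val + 1] k = 1).card = 8 →
    (Finset.univ.filter fun k : Fin 78 => wt (R := ℤ)
      ![a.val + 1, b.val + 1, c.val + 1, d.val + 1, e.val + 1, f.val + 1] k = 2).card < 6 := by
  decide +kernel

lemma exists_eq_zero_of_card {n : Fin 6 → ℤ} (h0 : ∀ i, 0 ≤ n i) (h2 : ∀ i, n i ≤ 2)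
    (h8 : (Finset.univ.filter fun k => wt n k = 0 ∨ wt n k = 1).card = 8)
    (h6 : 6 ≤ (Finset.univ.filter fun k => wt n k = 2).card) :
    ∃ i, n i = 0 ∧ ∀ j, j ≠ i → n j = 2 := by
  by_cases hz : ∃ i, n i = 0
  · obtain ⟨i, hi⟩ := hz
    refine ⟨i, hi, fun j hj => ?_⟩
    by_contra hj2
    have hsub : insert (pos j) (insert (pos i) (insert (neg i) (Finset.univ.image coroot))) ⊆
        Finset.univ.filter fun k => wt n k = 0 ∨ wt n k = 1 := by
      intro k
      simp only [Finset.mem_insert, Finset.mem_image, Finset.mem_univ, true_and, Finset.mem_filter]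
      rintro (rfl | rfl | rfl | ⟨l, rfl⟩)
      · have := h0 j
        have := h2 j
        rw [wt_pos]
        omega
      · simp [hi]
      · simp [hi]
      · simp
    have hcard : ∀ i j : Fin 6, j ≠ i →
      (insert (pos j) (insert (pos i) (insert (neg i) (Finset.univ.image coroot)))).card = 9 := by
      decide +kernel
    have := Finset.card_le_card hsub
    rw [hcard i j hj, h8] at this
    omega
  · push Not at hz
    have hn (i : Fin 6) : ∃ a : Fin 2, n i = a.val + 1 := by
      have h3 := h0 i
      have h4 := h2 i
      have h5 := hz i
      exact ⟨⟨(n i - 1).toNat, by omega⟩, by simp only; omega⟩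
    choose a ha using hn
    have hna : n = ![((a 0).val : ℤ) + 1, (a 1).val + 1, (a 2).val + 1, (a 3).val + 1,
        (a 4).val + 1, (a 5).val + 1] := by
      funext i
      rw [ha]
      fin_cases i <;> rfl
    rw [hna] at h8 h6
    exact absurd (card_filter_lt_six_of_card_eq_eight _ _ _ _ _ _ h8) (not_lt.mpr h6)

end E6

namespace E6

open LieAlgebra

lemma exists_lie_pos_eq (i : Fin 6) (k : Fin 78)
    (hk : wt (fun j => if j = i then (0 : ℤ) else 2) k = 2) :
    ∃ j ≠ i, k = pos j ∨ ∃ z : Fin 2, ((vecMat [(pos i, 1)]).bracket (vecMat [(pos j, 1)])).same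
      (vecMat [(k, 2 * z - 1)]) = true := by
  revert i k
  decide +kernel

lemma lie_lie_pos_same (i j : Fin 6) : ∃ z : Fin 3, ∃ k,
    ((vecMat [(pos i, 1)]).bracket (vecMat [(pos j, 1)])).same (vecMat [(k, z - 1)]) = true ∧
    ((vecMat [(pos i, 1)]).bracket (vecMat [(k, z - 1)])).same (vecMat []) = true := by
  revert i j
  decide +kernel

lemma neg_pos_same {i j : Fin 6} (hij : j ≠ i) :
    ((vecMat [(neg i, 1)]).bracket (vecMat [(pos j, 1)])).same (vecMat []) = true := by
  revert i j
  decide +kernel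

lemma pos_pos_same {i j : Fin 6} (hij : j ≠ i) (h : cartan i j = 0) :
    ((vecMat [(pos i, 1)]).bracket (vecMat [(pos j, 1)])).same (vecMat []) = true := by
  revert i j
  decide +kernel

namespace Pinning

variable {L : Type*} [LieRing L] [LieAlgebra ℂ L] (P : Pinning L) {e h : L}

lemma lie_pos_lie_pos_pos (i j : Fin 6) :
    ⁅P.basis (pos i), ⁅P.basis (pos i), P.basis (pos j)⁆⁆ = 0 := by
  obtain ⟨z, k, h1, h2⟩ := lie_lie_pos_same i j
  rw [← vec_singleton, ← vec_singleton, P.lie_vec h1, P.lie_vec h2, vec_nil]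

lemma lie_neg_pos {i j : Fin 6} (hij : j ≠ i) : ⁅P.basis (neg i), P.basis (pos j)⁆ = 0 := by
  rw [P.lie_basis (neg_pos_same hij), vec_nil]

lemma lie_coroot_pos (i j : Fin 6) :
    ⁅P.basis (coroot i), P.basis (pos j)⁆ = (cartan i j : ℂ) • P.basis (pos j) := by
  rw [coroot, ← tor_cartan, lie_tor, wt_pos]

lemma lie_neg_lie_pos_pos {i j : Fin 6} (hij : j ≠ i) :
    ⁅P.basis (neg i), ⁅P.basis (pos i), P.basis (pos j)⁆⁆ =
      -(cartan i j : ℂ) • P.basis (pos j) := by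
  rw [leibniz_lie, P.lie_neg_pos hij, lie_zero, add_zero,
    ← lie_skew (P.basis (neg i)) (P.basis (pos i)), lie_pos_neg, neg_lie, lie_coroot_pos, neg_smul]

lemma lie_tor_lie_pos_pos (m : Fin 6 → ℂ) (i j : Fin 6) :
    ⁅P.tor m, ⁅P.basis (pos i), P.basis (pos j)⁆⁆ =
      (m i + m j) • ⁅P.basis (pos i), P.basis (pos j)⁆ := by
  rw [leibniz_lie, lie_tor, lie_tor, wt_pos, wt_pos, smul_lie, lie_smul, add_smul]

/-- The combinations of the simple root vectors and of their brackets with the `i`-th one. -/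
noncomputable def form (i : Fin 6) (c d : Fin 6 → ℂ) : L :=
  ∑ j, (c j • P.basis (pos j) + d j • ⁅P.basis (pos i), P.basis (pos j)⁆)

lemma form_add (i : Fin 6) (c d c' d' : Fin 6 → ℂ) :
    P.form i (c + c') (d + d') = P.form i c d + P.form i c' d' := by
  rw [form, form, form, ← Finset.sum_add_distrib]
  refine Finset.sum_congr rfl fun j _ => ?_
  simp only [Pi.add_apply]
  module

lemma form_map (g : L ≃ₗ⁅ℂ⁆ L) (i : Fin 6) (c d : Fin 6 → ℂ) :
    (P.map g).form i c d = g (P.form i c d) := by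
  simp [form, LieEquiv.map_lie]

lemma lie_tor_form {i : Fin 6} {m c d : Fin 6 → ℂ} (hc : ∀ j, c j = 0 ∨ m j = 0)
    (hd : ∀ j : Fin 6, cartan i j = 0 ∨ d j = 0 ∨ m i + m j = 0) (hdi : d i = 0) :
    ⁅P.tor m, P.form i c d⁆ = 0 := by
  rw [form, lie_sum]
  refine Finset.sum_eq_zero fun j _ => ?_
  rw [lie_add, lie_smul, lie_smul, lie_tor, wt_pos, lie_tor_lie_pos_pos]
  have h1 : c j • m j • P.basis (pos j) = 0 := by
    rcases hc j with h | h <;> simp [h]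
  have h2 : d j • (m i + m j) • ⁅P.basis (pos i), P.basis (pos j)⁆ = 0 := by
    rcases hd j with h | h | h
    · by_cases hij : j = i
      · simp [hij, hdi]
      · rw [P.lie_basis (pos_pos_same hij h), vec_nil, smul_zero, smul_zero]
    · simp [h]
    · simp [h]
  rw [h1, h2, add_zero]

lemma exists_form_eq {i : Fin 6}
    (he : ⁅P.tor (fun j => if j = i then 0 else 2), e⁆ = (2 : ℂ) • e) :
    ∃ c d, c i = 0 ∧ d i = 0 ∧ P.form i c d = e := by
  have hform (j : Fin 6) (a b : ℂ) : P.form i (Pi.single j a) (Pi.single j b) =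
      a • P.basis (pos j) + b • ⁅P.basis (pos i), P.basis (pos j)⁆ := by
    rw [form, Finset.sum_eq_single j]
    · simp
    · intro k _ hk
      simp [hk]
    · simp
  rw [← P.basis.sum_repr e]
  refine Finset.sum_induction _ (fun y => ∃ c d, c i = 0 ∧ d i = 0 ∧ P.form i c d = y) ?_
    ⟨0, 0, rfl, rfl, by simp [form]⟩ ?_
  · rintro _ _ ⟨c, d, hc, hd, rfl⟩ ⟨c', d', hc', hd', rfl⟩
    exact ⟨c + c', d + d', by simp [hc, hc'], by simp [hd, hd'], P.form_add i c d c' d'⟩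
  · intro k _
    by_cases hk : P.basis.repr e k = 0
    · exact ⟨0, 0, rfl, rfl, by simp [form, hk]⟩
    have hw := P.wt_eq_of_repr_ne_zero (n := fun j => if j = i then 0 else 2) (z := 2)
      (by simpa using he) hk
    obtain ⟨j, hj, rfl | ⟨z, hz⟩⟩ := exists_lie_pos_eq i k hw
    · exact ⟨Pi.single j (P.basis.repr e (pos j)), Pi.single j 0, by simp [hj.symm],
        by simp, by rw [hform]; simp⟩
    · refine ⟨Pi.single j 0, Pi.single j (P.basis.repr e k * (2 * z - 1)), by simp,
        by simp [hj.symm], ?_⟩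
      have hzz : (2 * z - 1 : ℂ) * (2 * z - 1) = 1 := by
        fin_cases z <;> norm_num
      rw [hform, P.lie_basis hz, vec_cons, vec_nil, zero_smul, zero_add, add_zero, smul_smul]
      push_cast
      rw [mul_assoc, hzz, mul_one]

end Pinning

/-- The element `e` takes the form with coefficients `c` and `d` with respect to a pinning whose
`i`-th simple root vanishes on `h`, the other simple roots taking the value 2. -/
def Normal {L : Type*} [LieRing L] [LieAlgebra ℂ L] (h e : L) (i : Fin 6) (c d : Fin 6 → ℂ) :
    Prop :=
  ∃ P : Pinning L, P.tor (fun j => if j = i then 0 else 2) = h ∧ P.form i c d = e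

namespace Normal

variable {L : Type*} [LieRing L] [LieAlgebra ℂ L] [FiniteDimensional ℂ L] {e h : L} {i : Fin 6}
  {c d : Fin 6 → ℂ}

lemma eq_zero (hN : Normal h e i c d) (hdist : IsDistinguished L e) {m : Fin 6 → ℂ}
    (hc : ∀ j, c j = 0 ∨ m j = 0) (hd : ∀ j : Fin 6, cartan i j = 0 ∨ d j = 0 ∨ m i + m j = 0)
    (hdi : d i = 0) : m = 0 := by
  obtain ⟨P, -, rfl⟩ := hN
  exact P.tor_injective ((hdist _ (P.lie_tor_form hc hd hdi)
    (P.isSemisimple_ad_tor m)).trans P.tor_zero.symm)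

lemma exists_ne_zero (hN : Normal h e i c d) (hdist : IsDistinguished L e) (hdi : d i = 0)
    (hci : c i = 0) : ∃ j : Fin 6, cartan i j ≠ 0 ∧ c j ≠ 0 ∧ d j ≠ 0 := by
  by_contra! hj
  have h1 := hN.eq_zero hdist (m := fun j => if j = i then 1 else
    if cartan i j = 0 ∨ d j = 0 then 0 else -1) (fun j => by
      by_cases hji : j = i
      · exact .inl (hji ▸ hci)
      · by_cases hd : cartan i j = 0 ∨ d j = 0
        · simp [hji, hd]
        · push Not at hd
          exact .inl (by_contra fun hc => hd.2 (hj j hd.1 hc))) (fun j => by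
      by_cases hji : j = i
      · exact .inr (.inl (hji ▸ hdi))
      · by_cases hd : cartan i j = 0 ∨ d j = 0
        · exact hd.imp_right .inl
        · simp [hji, hd]) hdi
  simpa using congrFun h1 i

lemma add_smul (hN : Normal h e i c d) (s : ℂ) : Normal h e i c (d + s • c) := by
  obtain ⟨P, rfl, rfl⟩ := hN
  set g := expAd (s • P.basis (pos i))
  have h1 (j : Fin 6) : g (P.basis (pos j)) =
      P.basis (pos j) + s • ⁅P.basis (pos i), P.basis (pos j)⁆ :=
    expAd_of_lie_lie_eq_zero (by rw [smul_lie])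
      (by rw [smul_lie, lie_smul, P.lie_pos_lie_pos_pos, smul_zero, smul_zero])
  have h2 (j : Fin 6) : g ⁅P.basis (pos i), P.basis (pos j)⁆ =
      ⁅P.basis (pos i), P.basis (pos j)⁆ :=
    expAd_of_lie_eq_zero (by rw [smul_lie, P.lie_pos_lie_pos_pos, smul_zero])
  refine ⟨P.map g.symm, ?_, ?_⟩
  · rw [Pinning.map_tor, LieEquiv.symm_apply_eq]
    refine (expAd_of_lie_eq_zero ?_).symm
    rw [smul_lie, ← lie_skew, P.lie_tor, wt_pos]
    simp
  · rw [Pinning.form_map, LieEquiv.symm_apply_eq, Pinning.form, Pinning.form, map_sum]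
    refine Finset.sum_congr rfl fun j _ => ?_
    rw [map_add, map_smul, map_smul, h1, h2, Pi.add_apply, Pi.smul_apply, smul_eq_mul]
    module

lemma sub_smul (hN : Normal h e i c d) (s : ℂ) (hc : c i = 0) (hd : d i = 0) :
    Normal h e i (fun j => c j - s * cartan i j * d j) d := by
  obtain ⟨P, rfl, rfl⟩ := hN
  set g := expAd (s • P.basis (neg i))
  have h1 {j : Fin 6} (hj : j ≠ i) : g (P.basis (pos j)) = P.basis (pos j) :=
    expAd_of_lie_eq_zero (by rw [smul_lie, P.lie_neg_pos hj, smul_zero])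
  have h2 {j : Fin 6} (hj : j ≠ i) : g ⁅P.basis (pos i), P.basis (pos j)⁆ =
      ⁅P.basis (pos i), P.basis (pos j)⁆ + s • -(cartan i j : ℂ) • P.basis (pos j) :=
    expAd_of_lie_lie_eq_zero (by rw [smul_lie, P.lie_neg_lie_pos_pos hj])
      (by rw [smul_lie, lie_smul, lie_smul, P.lie_neg_pos hj]; simp)
  refine ⟨P.map g.symm, ?_, ?_⟩
  · rw [Pinning.map_tor, LieEquiv.symm_apply_eq]
    refine (expAd_of_lie_eq_zero ?_).symm
    rw [smul_lie, ← lie_skew, P.lie_tor, wt_neg]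
    simp
  · rw [Pinning.form_map, LieEquiv.symm_apply_eq, Pinning.form, Pinning.form, map_sum]
    refine Finset.sum_congr rfl fun j _ => ?_
    by_cases hj : j = i
    · subst hj
      simp [hc, hd]
    · rw [map_add, map_smul, map_smul, h1 hj, h2 hj]
      module

lemma exists_eq_zero (hN : Normal h e i c d) (hc : c i = 0) (hd : d i = 0) (j : Fin 6)
    (hj : cartan i j ≠ 0) : ∃ c d, Normal h e i c d ∧ c i = 0 ∧ d i = 0 ∧ d j = 0 := by
  by_cases hcj : c j = 0
  · refine ⟨_, _, (hN.sub_smul 1 hc hd).add_smul (1 / cartan i j), ?_, ?_, ?_⟩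
    · simp [hc, hd]
    · simp [hc, hd]
    · have : (cartan i j : ℂ) ≠ 0 := by exact_mod_cast hj
      simp [hcj]
      field_simp
      ring
  · refine ⟨_, _, hN.add_smul (-(d j / c j)), hc, by simp [hc, hd], ?_⟩
    simp [hcj]

lemma exists_mul_eq_zero (hN : Normal h e i c d) (hc : c i = 0) (hd : d i = 0) (j k : Fin 6)
    (hj : cartan i j ≠ 0) (hk : cartan i k ≠ 0) :
    ∃ c d, Normal h e i c d ∧ c i = 0 ∧ d i = 0 ∧ d j = 0 ∧ (c k = 0 ∨ d k = 0) := by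
  obtain ⟨c, d, hN, hc, hd, hdj⟩ := hN.exists_eq_zero hc hd j hj
  by_cases hdk : d k = 0
  · exact ⟨c, d, hN, hc, hd, hdj, .inr hdk⟩
  · refine ⟨_, d, hN.sub_smul (c k / (cartan i k * d k)) hc hd, by simp [hc, hd], hd, hdj, .inl ?_⟩
    have : (cartan i k : ℂ) ≠ 0 := by exact_mod_cast hk
    field_simp
    simp

/-- The node at which a subregular weighted Dynkin diagram vanishes is the branch node. -/
lemma eq_three (hN : Normal h e i c d) (hc : c i = 0) (hd : d i = 0)
    (hdist : IsDistinguished L e) : i = 3 := by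
  by_contra hi
  obtain ⟨j, k, hj, hk, hjk⟩ : ∃ j k : Fin 6, cartan i j ≠ 0 ∧ cartan i k ≠ 0 ∧
      ∀ l : Fin 6, cartan i l ≠ 0 → l = i ∨ l = j ∨ l = k := by
    clear hN hc hd
    revert i
    decide +kernel
  obtain ⟨c, d, hN, hc, hd, hdj, hdk⟩ := hN.exists_mul_eq_zero hc hd j k hj hk
  obtain ⟨l, hl, hcl, hdl⟩ := hN.exists_ne_zero hdist hd hc
  rcases hjk l hl with rfl | rfl | rfl
  · exact hcl hc
  · exact hdl hdj
  · exact hdk.elim hcl hdl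

lemma exists_of_three (hN : Normal h e 3 c d) (hc : c 3 = 0) (hd : d 3 = 0)
    (hdist : IsDistinguished L e) : ∃ c d, Normal h e 3 c d ∧ c 3 = 0 ∧ d 3 = 0 ∧ d 1 = 0 ∧
      c 2 = 0 ∧ c 0 ≠ 0 ∧ c 1 ≠ 0 ∧ d 2 ≠ 0 ∧ c 4 ≠ 0 ∧ d 4 ≠ 0 ∧ c 5 ≠ 0 := by
  have h3 : ∀ l : Fin 6, cartan 3 l ≠ 0 → l = 3 ∨ l = 1 ∨ l = 2 ∨ l = 4 := by decide +kernel
  obtain ⟨c, d, hN, hc, hd, h1, h2⟩ := hN.exists_mul_eq_zero hc hd 1 2 (by decide) (by decide)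
  have hd2 : d 2 ≠ 0 := by
    intro hd2
    obtain ⟨l, hl, hcl, hdl⟩ := hN.exists_ne_zero hdist hd hc
    have hd4 : d 4 ≠ 0 := by
      rcases h3 l hl with rfl | rfl | rfl | rfl
      exacts [absurd hd hdl, absurd h1 hdl, absurd hd2 hdl, hdl]
    have hN' := hN.sub_smul (c 4 / (cartan 3 4 * d 4)) hc hd
    obtain ⟨l, hl, hcl, hdl⟩ := hN'.exists_ne_zero hdist hd (by simp [hc, hd])
    rcases h3 l hl with rfl | rfl | rfl | rfl
    · exact hdl hd
    · exact hdl h1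
    · exact hdl hd2
    · have : (cartan 3 4 : ℂ) ≠ 0 := by exact_mod_cast (by decide : cartan 3 4 ≠ 0)
      refine hcl ?_
      simp only [Fin.isValue, Fin.coe_ofNat_eq_mod, Nat.reduceMod]
      field_simp
      simp
  have hc2 : c 2 = 0 := h2.resolve_right hd2
  obtain ⟨l, hl, hcl, hdl⟩ := hN.exists_ne_zero hdist hd hc
  have h4 : l = 4 := by
    rcases h3 l hl with rfl | rfl | rfl | rfl
    exacts [absurd hd hdl, absurd h1 hdl, absurd hc2 hcl, rfl]
  subst h4
  have hne {j : Fin 6} (hj : j = 0 ∨ j = 1 ∨ j = 5) : c j ≠ 0 := by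
    intro hcj
    have h5 := hN.eq_zero hdist (m := Pi.single j 1) (fun l => by
      by_cases hlj : l = j
      · exact .inl (hlj ▸ hcj)
      · simp [hlj]) (fun l => by
      by_cases hlj : l = j
      · subst hlj
        rcases hj with rfl | rfl | rfl
        · exact .inl (by decide)
        · exact .inr (.inl h1)
        · exact .inl (by decide)
      · refine .inr (.inr ?_)
        rcases hj with rfl | rfl | rfl <;> simp [hlj]) hd
    simpa using congrFun h5 j
  exact ⟨c, d, hN, hc, hd, h1, hc2, hne (by simp), hne (by simp), hd2, hcl, hdl, hne (by simp)⟩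

end Normal

/-- The coordinates of a representative of the subregular nilpotent orbit. -/
def subregularList : List (Fin 78 × ℤ) := [(0, 1), (1, 1), (4, 1), (5, 1), (8, 1), (9, 1)]

/-- The coordinates of the neutral element of the corresponding triple. -/
def subregularWeight : Fin 6 → ℂ := fun j => if j = 3 then 0 else 2

lemma Normal.exists_vec_eq {L : Type*} [LieRing L] [LieAlgebra ℂ L] [FiniteDimensional ℂ L]
    {e h : L} {c d : Fin 6 → ℂ} (hN : Normal h e 3 c d) (hc : c 3 = 0) (hd : d 3 = 0)
    (hdist : IsDistinguished L e) :
    ∃ P : Pinning L, h = P.tor subregularWeight ∧ e = P.vec subregularList := by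
  obtain ⟨c, d, ⟨P, rfl, rfl⟩, hc, hd, h1, h2, hc0, hc1, hd2, hc4, hd4, hc5⟩ :=
    hN.exists_of_three hc hd hdist
  have e30 : ⁅P.basis (pos 3), P.basis (pos 0)⁆ = 0 :=
    P.lie_basis (n := []) (by decide +kernel)
  have e35 : ⁅P.basis (pos 3), P.basis (pos 5)⁆ = 0 :=
    P.lie_basis (n := []) (by decide +kernel)
  have e32 : ⁅P.basis (pos 3), P.basis (pos 2)⁆ = P.basis 8 :=
    (P.lie_basis (n := [(8, 1)]) (by decide +kernel)).trans (P.vec_singleton 8)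
  have e34 : ⁅P.basis (pos 3), P.basis (pos 4)⁆ = -P.basis 9 := by
    rw [P.lie_basis (n := [(9, -1)]) (by decide +kernel), Pinning.vec_cons, Pinning.vec_nil]
    simp
  have hform : P.form 3 c d = c 0 • P.basis 0 + (c 1 • P.basis 1 + (c 4 • P.basis 4 +
      (c 5 • P.basis 5 + (d 2 • P.basis 8 + (-d 4) • P.basis 9)))) := by
    rw [Pinning.form, Fin.sum_univ_six, e30, e35, e32, e34, h1, h2, hc, hd]
    change c 0 • P.basis 0 + _ + (c 1 • P.basis 1 + _) + _ + _ + (c 4 • P.basis 4 + _) +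
      (c 5 • P.basis 5 + _) = _
    module
  let m4 := Complex.log (c 4)⁻¹
  let m3 := Complex.log (-d 4)⁻¹ - m4
  let m : Fin 6 → ℂ := ![Complex.log (c 0)⁻¹, Complex.log (c 1)⁻¹, Complex.log (d 2)⁻¹ - m3, m3, m4,
    Complex.log (c 5)⁻¹]
  have key {k : Fin 78} {a : ℂ} (ha : a ≠ 0) (hw : wt m k = Complex.log a⁻¹) :
      expAd (P.tor m) (a • P.basis k) = P.basis k := by
    rw [map_smul, expAd_of_lie_eq_smul (P.lie_tor m k), hw, Complex.exp_log (inv_ne_zero ha),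
      smul_smul, mul_inv_cancel₀ ha, one_smul]
  refine ⟨P.map (expAd (P.tor m)).symm, ?_, ?_⟩
  · rw [Pinning.map_tor, LieEquiv.eq_symm_apply, expAd_of_lie_eq_zero (P.lie_tor_tor _ _)]
    rfl
  · simp only [subregularList, Pinning.vec_cons, Pinning.vec_nil, Pinning.map_basis, Int.cast_one,
      one_smul, add_zero]
    rw [← map_add, ← map_add, ← map_add, ← map_add, ← map_add, LieEquiv.eq_symm_apply, hform]
    simp only [map_add]
    rw [key (k := 0) hc0 (wt_pos m 0), key (k := 1) hc1 (wt_pos m 1),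
      key (k := 4) hc4 (wt_pos m 4), key (k := 5) hc5 (wt_pos m 5), key hd2,
      key (neg_ne_zero.mpr hd4)]
    · simp [wt, Fin.sum_univ_six, (by decide : root 9 0 = 0 ∧ root 9 1 = 0 ∧ root 9 2 = 0 ∧
        root 9 3 = 1 ∧ root 9 4 = 1 ∧ root 9 5 = 0), m, m3]
    · simp [wt, Fin.sum_univ_six, (by decide : root 8 0 = 0 ∧ root 8 1 = 0 ∧ root 8 2 = 1 ∧
        root 8 3 = 1 ∧ root 8 4 = 0 ∧ root 8 5 = 0), m]

end E6

lemma IsSl2Triple.f_unique {L : Type*} [LieRing L] [LieAlgebra ℂ L] [FiniteDimensional ℂ L]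
    {h e f f' : L} (t : IsSl2Triple h e f) (h1 : ⁅e, f'⁆ = h) (h2 : ⁅h, f'⁆ = (-2 : ℂ) • f') :
    f = f' := by
  by_contra hne
  obtain ⟨n, hn⟩ := t.exists_nat_of_lie_e_eq_zero (sub_ne_zero.mpr hne) (μ := -2)
    (by rw [lie_sub, h2, t.lie_lie_smul_f ℂ]; module) (by rw [lie_sub, h1, t.lie_e_f, sub_self])
  have : (n + 2 : ℂ) = 0 := by rw [← hn]; ring
  exact absurd this (by exact_mod_cast (by omega : n + 2 ≠ 0))

namespace E6

/-- The coordinates of a basis of the centralizer of the subregular nilpotent element; the first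
five elements span its centre. -/
def centralizerList : Fin 8 → List (Fin 78 × ℤ) := ![
  subregularList,
  [(22, -1), (24, -1), (25, 1), (27, 1)],
  [(26, -1), (28, -1), (29, 2), (30, 1)],
  [(33, 1)],
  [(35, 1)],
  [(6, -2), (10, -1), (11, 1), (12, 1), (13, 1), (14, -1), (15, 1)],
  [(16, -2), (17, 1), (18, -1), (19, -2), (20, 1), (23, 2)],
  [(26, 1), (28, 1), (30, 1)]]

/-- The coordinates of a basis of the centre of the centralizer of the subregular nilpotent
element. -/
def centerList (i : Fin 5) : List (Fin 78 × ℤ) := centralizerList (i.castAdd 3)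

/-- The weights of the basis of the centre of the centralizer. -/
def centerWeight : Fin 5 → ℤ := ![2, 8, 10, 14, 16]

/-- The coordinates of the nilnegative element of the subregular triple. -/
def negList : List (Fin 78 × ℤ) :=
  [(36, 12), (37, 16), (38, 14), (40, 14), (41, 12), (43, 8), (44, 22), (45, 8)]

/-- An index of an element `x` of the centralizer for which `⁅⁅f, x⁆, z⁆` is a nonzero multiple of
the highest central element, with `z` a basis vector of the centre. -/
def partner : Fin 5 → Fin 8 := ![4, 2, 1, 5, 0]

/-- The multiple of the highest central element attained with `partner`. -/
def partnerCoeff : Fin 5 → ℤ := ![-16, 40, 40, -28, -16]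

/-- The coordinates of the brackets of the nilnegative element with the elements `partner`. -/
def partnerList : Fin 5 → List (Fin 78 × ℤ) := ![
  [(33, -8), (34, 16)],
  [(21, 10), (24, 20), (25, 10), (27, -10)],
  [(16, -8), (17, -4), (18, -12), (19, 8), (20, 4)],
  [(0, -6), (1, -14), (2, 8), (4, 2), (5, 6), (7, 28), (8, -10), (9, 10)],
  [(72, -12), (73, -16), (74, -22), (75, -30), (76, -22), (77, -12)]]

/-- The coefficient of a basis vector in a formal combination. -/
def listCoeff (l : List (Fin 78 × ℤ)) (k : Fin 78) : ℤ :=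
  (l.map fun t => if t.1 = k then t.2 else 0).sum

lemma lie_centerList_same (i : Fin 5) (j : Fin 8) :
    ((vecMat (centerList i)).bracket (vecMat (centralizerList j))).same (vecMat []) = true := by
  revert i j
  decide +kernel

lemma lie_partner_same (i : Fin 5) :
    ((vecMat negList).bracket (vecMat (centralizerList (partner i)))).same
      (vecMat (partnerList i)) = true := by
  revert i
  decide +kernel

lemma lie_partnerList_same (i : Fin 5) :
    ((vecMat (partnerList i)).bracket (vecMat (centerList i))).same
      (vecMat [(35, partnerCoeff i)]) = true := by
  revert i
  decide +kernel

lemma lie_partnerList_same_of_lt (i j : Fin 5) (hij : i < j) :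
    ((vecMat (partnerList i)).bracket (vecMat (centerList j))).same (vecMat []) = true := by
  revert i j
  decide +kernel

lemma wt_centerList (i : Fin 5) : ∀ t ∈ centerList i,
    wt (fun j => if j = 3 then (0 : ℤ) else 2) t.1 = centerWeight i := by
  revert i
  decide +kernel

namespace Pinning

variable {L : Type*} [LieRing L] [LieAlgebra ℂ L] (P : Pinning L)

/-- A distinguished nilpotent element with 8-dimensional centralizer has the standard form in a
suitable pinning. -/
lemma exists_subregular [FiniteDimensional ℂ L] (P : Pinning L) {e h f : L} (t : IsSl2Triple h e f)
    (he : IsNilpotent (LieAlgebra.ad ℂ L e)) (hdist : IsDistinguished L e)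
    (hdim : Module.finrank ℂ ↥(centralizer L e) = 8) :
    ∃ P : Pinning L, h = P.tor subregularWeight ∧ e = P.vec subregularList := by
  obtain ⟨P, n, rfl, hn⟩ := exists_tor_eq_of_nonneg P t he
  have h2 := t.lie_h_e_smul ℂ
  obtain ⟨i, hi, hj⟩ := exists_eq_zero_of_card hn (P.le_two_of_isDistinguished hdist h2 hn)
    ((P.card_filter_eq_finrank t).trans hdim) (P.six_le_card_of_isDistinguished hdist h2)
  have hni : (fun j => (n j : ℂ)) = fun j => if j = i then 0 else 2 := by
    funext j
    split_ifs with h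
    · simp [h, hi]
    · simp [hj j h]
  rw [hni] at h2 ⊢
  obtain ⟨c, d, hc, hd, rfl⟩ := P.exists_form_eq h2
  have hN : Normal (P.tor fun j => if j = i then 0 else 2) (P.form i c d) i c d := ⟨P, rfl, rfl⟩
  obtain rfl := hN.eq_three hc hd hdist
  exact hN.exists_vec_eq hc hd hdist

lemma repr_vec (l : List (Fin 78 × ℤ)) (k : Fin 78) :
    P.basis.repr (P.vec l) k = (listCoeff l k : ℂ) := by
  induction l with
  | nil => simp [listCoeff]
  | cons t l ih =>
    rw [vec_cons, map_add, map_smul, Finsupp.add_apply, Finsupp.smul_apply, ih,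
      Module.Basis.repr_self, Finsupp.single_apply]
    simp [listCoeff, apply_ite (Int.cast : ℤ → ℂ)]

lemma lie_tor_vec {w : Fin 6 → ℤ} {c : ℤ} {l : List (Fin 78 × ℤ)}
    (hl : ∀ t ∈ l, wt w t.1 = c) :
    ⁅P.tor fun i => (w i : ℂ), P.vec l⁆ = (c : ℂ) • P.vec l := by
  induction l with
  | nil => simp
  | cons t l ih =>
    rw [vec_cons, lie_add, lie_smul, lie_tor, wt_intCast, hl t (by simp),
      ih fun s hs => hl s (by simp [hs])]
    module

lemma tor_subregularWeight_eq :
    P.tor subregularWeight = P.tor fun i => ((if i = 3 then 0 else 2 : ℤ) : ℂ) := by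
  congr 1
  funext i
  simp [subregularWeight, apply_ite (Int.cast : ℤ → ℂ)]

lemma tor_subregularWeight : P.tor subregularWeight =
    P.vec [(72, 12), (73, 16), (74, 22), (75, 30), (76, 22), (77, 12)] := by
  have key (j : Fin 6) : ∑ i : Fin 6, subregularWeight i * (cartanInv i j / 3 : ℂ) =
      (![12, 16, 22, 30, 22, 12] : Fin 6 → ℂ) j := by
    fin_cases j <;> simp [Fin.sum_univ_six, subregularWeight, cartanInv] <;> norm_num
  simp only [tor, key, vec_cons, vec_nil]
  rw [Fin.sum_univ_six]
  simp [Fin.natAdd]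
  abel

lemma lie_subregularList_negList :
    ⁅P.vec subregularList, P.vec negList⁆ = P.tor subregularWeight := by
  rw [tor_subregularWeight]
  exact P.lie_vec (by decide +kernel)

lemma f_eq_vec [FiniteDimensional ℂ L] {f : L}
    (t : IsSl2Triple (P.tor subregularWeight) (P.vec subregularList) f) : f = P.vec negList := by
  refine t.f_unique P.lie_subregularList_negList ?_
  rw [tor_subregularWeight_eq, P.lie_tor_vec (c := -2) (by decide +kernel)]
  simp

lemma linearIndependent_centralizerList :
    LinearIndependent ℂ fun i => P.vec (centralizerList i) := by
  rw [Fintype.linearIndependent_iff]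
  intro g hg
  have h (k : Fin 78) : ∑ i, g i * (listCoeff (centralizerList i) k : ℂ) = 0 := by
    simpa [repr_vec, Finsupp.finsetSum_apply] using congrArg (fun x => P.basis.repr x k) hg
  let s : Fin 8 → Fin 78 := ![0, 27, 29, 33, 35, 6, 16, 30]
  have hs (i j : Fin 8) : listCoeff (centralizerList i) (s j) =
      if i = j then ![1, 1, 2, 1, 1, -2, -2, 1] j else if i = 2 ∧ j = 7 then 1 else 0 := by
    revert i j
    decide +kernel
  have h1 (j : Fin 8) (hj : j ≠ 7) : g j = 0 := by
    have := h (s j)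
    rw [Finset.sum_eq_single j (fun i _ hi => by simp [hs, hi, hj]) (by simp), hs, if_pos rfl,
      mul_eq_zero, Int.cast_eq_zero] at this
    exact this.resolve_right ((by decide : ∀ j : Fin 8, ![1, 1, 2, 1, 1, -2, -2, (1 : ℤ)] j ≠ 0) j)
  intro j
  by_cases hj : j = 7
  · have := h (s 7)
    rw [Finset.sum_eq_single 7 (fun i _ hi => by simp [h1 i hi]) (by simp), hs, if_pos rfl] at this
    simpa [hj] using this
  · exact h1 j hj

lemma lie_centralizerList (j : Fin 8) :
    ⁅P.vec (centralizerList j), P.vec subregularList⁆ = 0 := by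
  have := P.lie_vec (lie_centerList_same 0 j)
  rw [vec_nil, ← lie_skew, neg_eq_zero] at this
  exact this

lemma linearIndependent_centerList : LinearIndependent ℂ fun i => P.vec (centerList i) :=
  P.linearIndependent_centralizerList.comp _ (Fin.castAdd_injective 5 3)

lemma exists_eq_sum_centralizerList [FiniteDimensional ℂ L]
    (hdim : Module.finrank ℂ ↥(centralizer L (P.vec subregularList)) = 8) {x : L}
    (hx : ⁅x, P.vec subregularList⁆ = 0) :
    ∃ g : Fin 8 → ℂ, x = ∑ i, g i • P.vec (centralizerList i) := by
  have h1 : Submodule.span ℂ (Set.range fun i => P.vec (centralizerList i)) =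
      (centralizer L (P.vec subregularList)).toSubmodule := by
    refine Submodule.eq_of_le_of_finrank_eq (Submodule.span_le.mpr ?_) ?_
    · rintro _ ⟨i, rfl⟩
      exact P.lie_centralizerList i
    · rw [finrank_span_eq_card P.linearIndependent_centralizerList, Fintype.card_fin]
      exact hdim.symm
  have h2 : x ∈ (centralizer L (P.vec subregularList)).toSubmodule := hx
  rw [← h1, Submodule.mem_span_range_iff_exists_fun] at h2
  obtain ⟨g, hg⟩ := h2
  exact ⟨g, hg.symm⟩

lemma inCenter_centerList [FiniteDimensional ℂ L]
    (hdim : Module.finrank ℂ ↥(centralizer L (P.vec subregularList)) = 8) (i : Fin 5) :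
    InCenterOfCentralizer L (P.vec subregularList) (P.vec (centerList i)) := by
  refine ⟨P.lie_centralizerList _, fun y hy => ?_⟩
  obtain ⟨g, rfl⟩ := P.exists_eq_sum_centralizerList hdim hy
  simp only [lie_sum, lie_smul]
  exact Finset.sum_eq_zero fun j _ => by
    rw [P.lie_vec (lie_centerList_same i j), vec_nil, smul_zero]

lemma exists_eq_sum_centerList [FiniteDimensional ℂ L]
    (hdim : Module.finrank ℂ ↥(centralizer L (P.vec subregularList)) = 8) {x : L}
    (hx : InCenterOfCentralizer L (P.vec subregularList) x) :
    ∃ a : Fin 5 → ℂ, x = ∑ i, a i • P.vec (centerList i) := by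
  obtain ⟨g, rfl⟩ := P.exists_eq_sum_centralizerList hdim hx.1
  have h1 (j : Fin 8) : ∑ i, g i • ⁅P.vec (centralizerList j), P.vec (centralizerList i)⁆ = 0 := by
    have := hx.2 _ (P.lie_centralizerList j)
    rw [← lie_skew, neg_eq_zero, lie_sum] at this
    simpa only [lie_smul] using this
  have h2 (j : Fin 8) (i : Fin 5) :
      ⁅P.vec (centralizerList j), P.vec (centralizerList (i.castAdd 3))⁆ = 0 := by
    rw [← lie_skew, neg_eq_zero]
    exact P.lie_vec (lie_centerList_same i j)
  have h3 (j : Fin 8) (k : Fin 78) (l : Fin 3 → List (Fin 78 × ℤ))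
      (hl : ∀ i, ((vecMat (centralizerList j)).bracket (vecMat
        (centralizerList (i.natAdd 5)))).same (vecMat (l i)) = true) :
      ∑ i : Fin 3, g (i.natAdd 5) * (listCoeff (l i) k : ℂ) = 0 := by
    have := congrArg (fun x => P.basis.repr x k) (h1 j)
    rw [Fin.sum_univ_add (a := 5) (b := 3)] at this
    rw [Finset.sum_eq_zero fun i _ => (by rw [h2 j i, smul_zero] : _ = (0 : L))] at this
    simpa [P.lie_vec (hl _), repr_vec, Finsupp.finsetSum_apply] using this
  have h6 := h3 5 30 ![[], [(26, 6), (28, 6), (30, 6)], [(33, 4)]] (by decide +kernel)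
  have h7 := h3 5 33 ![[], [(26, 6), (28, 6), (30, 6)], [(33, 4)]] (by decide +kernel)
  have h5 := h3 6 30 ![[(26, -6), (28, -6), (30, -6)], [], [(35, 6)]] (by decide +kernel)
  simp [Fin.sum_univ_three, listCoeff] at h5 h6 h7
  refine ⟨fun i => g (i.castAdd 3), ?_⟩
  rw [Fin.sum_univ_add (a := 5) (b := 3)]
  refine add_eq_left.mpr (Finset.sum_eq_zero fun i _ => ?_)
  fin_cases i <;> simp [h5, h6, h7]

lemma finrank_zCenter [FiniteDimensional ℂ L]
    (hdim : Module.finrank ℂ ↥(centralizer L (P.vec subregularList)) = 8) :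
    Module.finrank ℂ (zCenter L (P.vec subregularList)) = 5 := by
  have h1 : zCenter L (P.vec subregularList) =
      Submodule.span ℂ (Set.range fun i => P.vec (centerList i)) := by
    refine le_antisymm (fun x hx => ?_) (Submodule.span_le.mpr ?_)
    · obtain ⟨a, rfl⟩ := P.exists_eq_sum_centerList hdim hx
      exact Submodule.mem_span_range_iff_exists_fun ℂ |>.mpr ⟨a, rfl⟩
    · rintro _ ⟨i, rfl⟩
      exact P.inCenter_centerList hdim i
  rw [h1, finrank_span_eq_card P.linearIndependent_centerList, Fintype.card_fin]

lemma lie_tor_centerList (i : Fin 5) :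
    ⁅P.tor subregularWeight, P.vec (centerList i)⁆ =
      (centerWeight i : ℂ) • P.vec (centerList i) := by
  rw [tor_subregularWeight_eq, P.lie_tor_vec (wt_centerList i)]

lemma weight_mul_eq {a : Fin 5 → ℂ} {m : ℂ}
    (h : ⁅P.tor subregularWeight, ∑ i, a i • P.vec (centerList i)⁆ =
      m • ∑ i, a i • P.vec (centerList i)) (i : Fin 5) (hi : a i ≠ 0) : m = centerWeight i := by
  have h1 : ∑ i, (a i * (centerWeight i - m)) • P.vec (centerList i) = 0 := by
    rw [lie_sum, Finset.smul_sum, ← sub_eq_zero, ← Finset.sum_sub_distrib] at h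
    rw [← h]
    refine Finset.sum_congr rfl fun i _ => ?_
    rw [lie_smul, lie_tor_centerList]
    module
  have h2 := Fintype.linearIndependent_iff.mp P.linearIndependent_centerList _ h1 i
  exact (sub_eq_zero.mp ((mul_eq_zero.mp h2).resolve_left hi)).symm

lemma exists_eigenvector_iff [FiniteDimensional ℂ L]
    (hdim : Module.finrank ℂ ↥(centralizer L (P.vec subregularList)) = 8) (m : ℂ) :
    (∃ z : L, z ≠ 0 ∧ InCenterOfCentralizer L (P.vec subregularList) z ∧
      ⁅P.tor subregularWeight, z⁆ = m • z) ↔ ∃ i, m = centerWeight i := by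
  constructor
  · rintro ⟨z, hz, hc, hm⟩
    obtain ⟨a, rfl⟩ := P.exists_eq_sum_centerList hdim hc
    obtain ⟨i, -, hi⟩ := Finset.exists_ne_zero_of_sum_ne_zero hz
    exact ⟨i, P.weight_mul_eq hm i (left_ne_zero_of_smul hi)⟩
  · rintro ⟨i, rfl⟩
    exact ⟨_, P.linearIndependent_centerList.ne_zero i, P.inCenter_centerList hdim i,
      P.lie_tor_centerList i⟩

lemma propertyP [FiniteDimensional ℂ L]
    (hdim : Module.finrank ℂ ↥(centralizer L (P.vec subregularList)) = 8) :
    PropertyP L (P.vec subregularList) (P.tor subregularWeight) (P.vec negList) := by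
  intro m hm hmax v hv hv0 z hz hzm
  obtain ⟨i₀, rfl⟩ := (P.exists_eigenvector_iff hdim m).mp hm
  have hi₀ : i₀ = 4 := by
    have h1 := hmax _ ((P.exists_eigenvector_iff hdim _).mpr ⟨4, rfl⟩)
    have h2 : centerWeight 4 ≤ centerWeight i₀ := by simpa using (Complex.le_def.mp h1).1
    exact (by decide : ∀ i, centerWeight 4 ≤ centerWeight i → i = 4) i₀ h2
  subst hi₀
  obtain ⟨b, rfl⟩ := P.exists_eq_sum_centerList hdim hz
  obtain ⟨a, rfl⟩ := P.exists_eq_sum_centerList hdim hv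
  have hb (i : Fin 5) (hi : i ≠ 4) : b i = 0 := by
    by_contra h1
    have h2 : centerWeight 4 = centerWeight i := by exact_mod_cast P.weight_mul_eq hzm i h1
    exact hi ((by decide : ∀ i, centerWeight 4 = centerWeight i → i = 4) i h2)
  have hz4 : ∑ i, b i • P.vec (centerList i) = b 4 • P.vec (centerList 4) :=
    Finset.sum_eq_single 4 (fun i _ hi => by rw [hb i hi, zero_smul]) (by simp)
  rw [hz4]
  have hne : {i | a i ≠ 0}.Nonempty := by
    obtain ⟨i, -, hi⟩ := Finset.exists_ne_zero_of_sum_ne_zero hv0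
    exact ⟨i, left_ne_zero_of_smul hi⟩
  obtain ⟨j, hj, hmin⟩ := Set.exists_min_image _ id (Set.toFinite _) hne
  refine ⟨(b 4 / (a j * partnerCoeff j)) • P.vec (centralizerList (partner j)),
    by rw [smul_lie, P.lie_centralizerList, smul_zero], ?_⟩
  have hc : (partnerCoeff j : ℂ) ≠ 0 :=
    Int.cast_ne_zero.mpr ((by decide : ∀ j, partnerCoeff j ≠ 0) j)
  rw [lie_smul, P.lie_vec (lie_partner_same j), lie_sum, Finset.sum_eq_single j, lie_smul, smul_lie,
    P.lie_vec (lie_partnerList_same j), vec_cons, vec_nil, add_zero, smul_smul, smul_smul]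
  · have h35 : P.vec (centerList 4) = P.basis 35 := P.vec_singleton 35
    rw [h35]
    congr 1
    have : a j ≠ 0 := hj
    field_simp
  · intro i _ hij
    rcases lt_or_gt_of_ne hij with h1 | h1
    · have : a i = 0 := by
        by_contra h2
        exact absurd (hmin i h2) (not_le.mpr h1)
      rw [this, zero_smul, lie_zero]
    · rw [lie_smul, smul_lie, P.lie_vec (lie_partnerList_same_of_lt j i h1), vec_nil, smul_zero,
        smul_zero]
  · simp

end Pinning

end E6

/-- For the subregular distinguished nilpotent orbit of `E₆`
(`dim 𝔤^e = 8`): `dim 𝔷(𝔤^e) = 5`, the eigenvalues of `ad h` on `𝔷(𝔤^e)` are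
`2, 8, 10, 14, 16`, and `e` satisfies property (P). -/
theorem e6_subregular_propertyP
    (L : Type*) [LieRing L] [LieAlgebra ℂ L] [FiniteDimensional ℂ L]
    [LieAlgebra.IsSimple ℂ L] (htype : Nonempty (L ≃ₗ⁅ℂ⁆ LieAlgebra.e₆ ℂ))
    (e h f : L) (ht : IsSl2Triple h e f) (he : IsNilpotent (LieAlgebra.ad ℂ L e))
    (hdist : IsDistinguished L e)
    (hdim : Module.finrank ℂ ↥(centralizer L e) = 8) :
    Module.finrank ℂ ↥(zCenter L e) = 5 ∧
    (∀ m : ℂ, (∃ z : L, z ≠ 0 ∧ InCenterOfCentralizer L e z ∧ ⁅h, z⁆ = m • z) ↔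
      m ∈ ({2, 8, 10, 14, 16} : Set ℂ)) ∧
    PropertyP L e h f := by
  obtain ⟨P₀⟩ := E6.nonempty_pinning L htype.some
  obtain ⟨P, rfl, rfl⟩ := P₀.exists_subregular ht he hdist hdim
  obtain rfl := P.f_eq_vec ht
  refine ⟨P.finrank_zCenter hdim, fun m => ?_, P.propertyP hdim⟩
  rw [P.exists_eigenvector_iff hdim]
  simp [Fin.exists_fin_succ, E6.centerWeight]
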